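/- There exists a nonempty Π⁰₁ closed subset Q ⊆ ℝ² which is homeomorphic to the Cantor fan and contains no computable point. -/

import Mathlib

open Set Metric

section TopDefs

variable {α : Type*} [TopologicalSpace α]

/-- `A ⊆ α` is an arc with endpoints `x` and `y`:
a homeomorphic (continuous injective) image of `[0,1]` sending `0 ↦ x`, `1 ↦ y`. -/
def IsArc (A : Set α) (x y : α) : Prop :=
  ∃ f : Set.Icc (0:ℝ) 1 → α, Continuous f ∧ Function.Injective f ∧
    Set.range f = A ∧ f ⟨0, by norm_num⟩ = x ∧ f ⟨1, by norm_num⟩ = y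

/-- A continuum: a nonempty compact connected set. -/
def IsContinuum (X : Set α) : Prop := IsCompact X ∧ IsConnected X

/-- Any two distinct points of `X` are endpoints of an arc contained in `X`. -/
def ArcwiseConnectedSet (X : Set α) : Prop :=
  ∀ x ∈ X, ∀ y ∈ X, x ≠ y → ∃ A, A ⊆ X ∧ IsArc A x y

/-- `X` is unicoherent: for all closed connected `A, B ⊆ X` with `A ∪ B = X`,
the intersection `A ∩ B` is connected. -/
def UnicoherentSet (X : Set α) : Prop :=
  ∀ A B : Set α, A ⊆ X → B ⊆ X → IsClosed A → IsClosed B →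
    IsConnected A → IsConnected B → A ∪ B = X → IsConnected (A ∩ B)

/-- Every subcontinuum of `X` is unicoherent. -/
def HereditarilyUnicoherent (X : Set α) : Prop :=
  ∀ Y, Y ⊆ X → IsContinuum Y → UnicoherentSet Y

/-- A dendroid: an arcwise connected, hereditarily unicoherent continuum. -/
def IsDendroid (X : Set α) : Prop :=
  IsContinuum X ∧ ArcwiseConnectedSet X ∧ HereditarilyUnicoherent X

/-- The unit circle `S¹`. -/
def unitCircle : Set (EuclideanSpace ℝ (Fin 2)) := Metric.sphere 0 1

/-- A dendrite: a locally connected continuum containing no subset homeomorphic to `S¹`. -/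
def IsDendrite (X : Set α) : Prop :=
  IsContinuum X ∧ LocallyConnectedSpace ↥X ∧
    ∀ S : Set α, S ⊆ X → IsEmpty (↥S ≃ₜ ↥unitCircle)

/-- `x` and `y` lie in the same arc-component of `Y`. -/
def SameArcComponent (Y : Set α) (x y : α) : Prop :=
  x = y ∨ ∃ A, A ⊆ Y ∧ IsArc A x y

/-- `x` is a ramification point of `X`: `X \ {x}` has at least three arc-components. -/
def IsRamificationPoint (X : Set α) (x : α) : Prop :=
  x ∈ X ∧ ∃ u v w, u ∈ X \ {x} ∧ v ∈ X \ {x} ∧ w ∈ X \ {x} ∧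
    ¬ SameArcComponent (X \ {x}) u v ∧ ¬ SameArcComponent (X \ {x}) u w ∧
    ¬ SameArcComponent (X \ {x}) v w

/-- A tree (as a continuum): a dendrite with finitely many ramification points. -/
def IsTreeContinuum (X : Set α) : Prop :=
  IsDendrite X ∧ {x | IsRamificationPoint X x}.Finite

end TopDefs

section CompDefs

/-- The rational open ball in `ℝ²` coded by `((q₁, q₂), r)`. -/
def ballOfCode (c : (ℚ × ℚ) × ℚ) : Set (ℝ × ℝ) :=
  {x | dist x (((c.1.1 : ℝ), (c.1.2 : ℝ)) : ℝ × ℝ) < (c.2 : ℝ)}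

/-- A closed set `F ⊆ ℝ²` is `Π⁰₁` if it is the complement of the union of the rational
open balls coded by some c.e. set of codes. -/
def IsPi01Closed (F : Set (ℝ × ℝ)) : Prop :=
  ∃ W : (ℚ × ℚ) × ℚ → Prop, REPred W ∧ F = Set.univ \ ⋃ c ∈ {c | W c}, ballOfCode c

/-- `F ⊆ ℝ²` is c.e. closed if the set of codes of rational open balls meeting `F` is c.e. -/
def IsCEClosed (F : Set (ℝ × ℝ)) : Prop :=
  REPred (fun c : (ℚ × ℚ) × ℚ => (F ∩ ballOfCode c).Nonempty)

/-- A computable closed subset of `ℝ²`: both `Π⁰₁` and c.e. closed. -/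
def IsComputableClosed (F : Set (ℝ × ℝ)) : Prop :=
  IsPi01Closed F ∧ IsCEClosed F

/-- A point of `ℝ²` is computable if the set of codes of rational open balls
containing it is c.e. -/
def IsComputablePoint (x : ℝ × ℝ) : Prop :=
  REPred (fun c : (ℚ × ℚ) × ℚ => x ∈ ballOfCode c)

end CompDefs

section PsiDefs

/-- A tree of binary strings: a set of finite binary strings closed under prefixes. -/
def IsTreeOfStrings (T : Set (List Bool)) : Prop :=
  ∀ σ ∈ T, ∀ τ : List Bool, τ <+: σ → τ ∈ T

/-- The point `ψ(σ) ∈ ℝ²` associated with the binary string `σ`. -/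
noncomputable def psiPt (σ : List Bool) : ℝ × ℝ :=
  ((3:ℝ) ^ (-(σ.length : ℤ)) / 2 +
      2 * ∑ i ∈ Finset.range σ.length,
        (if σ.getD i false then (3:ℝ) ^ (-((i : ℤ) + 1)) else 0),
    (2:ℝ) ^ (-(σ.length : ℤ)))

/-- The planar embedding `Ψ(T)` of a tree `T` of binary strings: the closure of the union
of the segments from `ψ(σ⁻)` to `ψ(σ)` over nonempty `σ ∈ T` (together with the points
`ψ(σ)`, `σ ∈ T`, which makes no difference except for the degenerate trees `∅`, `{⟨⟩}`). -/
noncomputable def PsiSet (T : Set (List Bool)) : Set (ℝ × ℝ) :=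
  closure (psiPt '' T ∪ ⋃ σ ∈ T, ⋃ (_ : σ ≠ []), segment ℝ (psiPt σ.dropLast) (psiPt σ))

end PsiDefs

/-- The middle-thirds Cantor set. -/
def middleThirdsCantorSet : Set ℝ :=
  {x | ∃ a : ℕ → Bool, x = ∑' i : ℕ, 2 * (if a i then (1:ℝ) else 0) * 3 ^ (-((i : ℤ) + 1))}

/-- The Cantor fan: the union of the segments joining the points `(c, 1)`, `c` in the Cantor
set, to the apex `(1/2, 0)`. -/
def cantorFanSet : Set (ℝ × ℝ) :=
  {p | ∃ c ∈ middleThirdsCantorSet, ∃ t ∈ Set.Icc (0:ℝ) 1,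
    p = (1 - t) • ((c, 1) : ℝ × ℝ) + t • ((1/2, 0) : ℝ × ℝ)}

/-!
Let `K = {e | φ_e(e) = 0}`. Coding binary sequences by reals so that the even letters of every coded
point separate `K` from `{e | φ_e(e) = 1}`, while the odd letters are free, gives a `Π⁰₁` Cantor set
without computable points. Drawing the fan over this Cantor set deals with all of its points except
the apex, where the strands meet.

To make the apex noncomputable, it is approached through infinitely many stages. The picture at
stage `s` is a comb: teeth over the stage `s` approximation of the Cantor set, joined at the top by
a solid block. Inside this comb runs a bent tube, whose strands go up the teeth, turn around in the
block and come down through a thin leg inside the leftmost tooth. A computable Lipschitz map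
straightens the tube and turns it into the next comb, whose block comes from a small piece of the
thin leg. If `e` enters `K` at stage `s`, this piece is taken at the height of level `e`. A point of
the fan either stays below almost all of these pieces, and then its orbit settles at a point of the
Cantor set times `[0, ∞)`, or its orbit climbs forever. The thinness of each leg is chosen against
the Lipschitz constants of the inverses of all earlier stages, so that only one point has an orbit
of the second kind, namely the apex. Once the orbit of the apex has risen above level `e`, the
number `e` can no longer enter `K`; hence a computable apex would make the complement of `K`
computably enumerable.
-/

namespace CantorFan

/-! ### Computable functions on `ℕ` and `ℚ` -/

section ComputablePredicates

variable {α β σ : Type*} [Primcodable α] [Primcodable β] [Primcodable σ]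

theorem computablePred_comp {p : β → Prop} (hp : ComputablePred p) {f : α → β}
    (hf : Computable f) : ComputablePred fun a => p (f a) := by
  obtain ⟨_, hp⟩ := hp
  exact ⟨fun _ => inferInstance, hp.comp hf⟩

theorem computablePred_and {p q : α → Prop} (hp : ComputablePred p) (hq : ComputablePred q) :
    ComputablePred fun a => p a ∧ q a := by
  obtain ⟨_, hp⟩ := hp
  obtain ⟨_, hq⟩ := hq
  exact ⟨fun _ => inferInstance, (Primrec.and.to_comp.comp hp hq).of_eq fun a => by simp⟩

theorem computable_ite {p : α → Prop} [DecidablePred p] (hp : ComputablePred p)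
    {f g : α → σ} (hf : Computable f) (hg : Computable g) :
    Computable fun a => if p a then f a else g a :=
  (hp.decide.cond hf hg).of_eq fun a => by simp only [Bool.cond_decide]

theorem computablePred_eq {f g : α → σ} (hf : Computable f) (hg : Computable g) :
    ComputablePred fun a => f a = g a := by
  classical
  exact computablePred_comp (PrimrecPred.computablePred (Primrec.eq (α := σ))) (hf.pair hg)

theorem computablePred_nat_lt {f g : α → ℕ} (hf : Computable f) (hg : Computable g) :
    ComputablePred fun a => f a < g a :=
  computablePred_comp (PrimrecPred.computablePred Primrec.nat_lt) (hf.pair hg)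

theorem computable₂_of_recurrence {f : α → ℕ → σ} {h : α → ℕ × σ → σ}
    (hf0 : Computable fun a => f a 0) (hh : Computable₂ h)
    (hf : ∀ a n, f a (n + 1) = h a (n, f a n)) : Computable₂ f := by
  refine (Computable.nat_rec Computable.snd (hf0.comp Computable.fst)
    (hh.comp (Computable.fst.comp Computable.fst) Computable.snd).to₂).of_eq fun ⟨a, n⟩ => ?_
  induction n with
  | zero => rfl
  | succ n ih => rw [hf, ← ih]

theorem computable_of_recurrence {f : ℕ → σ} {h : ℕ → σ → σ} (hh : Computable₂ h)
    (hf : ∀ n, f (n + 1) = h n (f n)) : Computable f :=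
  (computable₂_of_recurrence (f := fun _ : Unit => f) (h := fun _ x => h x.1 x.2)
    (Computable.const _) (hh.comp (Computable.fst.comp Computable.snd)
      (Computable.snd.comp Computable.snd)) fun _ => hf).comp (Computable.const ()) Computable.id

theorem computable_pow (b : ℕ) : Computable fun n => b ^ n :=
  computable_of_recurrence (h := fun _ p => p * b)
    (Primrec.nat_mul.to_comp.comp Computable.snd (Computable.const b)) (pow_succ b)

theorem exists_computable_recurrence {q : ℕ → σ → σ} (hq : Computable₂ q) :
    ∃ Q : ℕ → σ → σ, Computable₂ Q ∧ (∀ x, Q 0 x = x) ∧ ∀ s x, Q (s + 1) x = q s (Q s x) := by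
  have hQ : Computable₂ fun x s => Nat.rec (motive := fun _ => σ) x q s :=
    computable₂_of_recurrence (h := fun _ y => q y.1 y.2) Computable.id
      (hq.comp (Computable.fst.comp Computable.snd) (Computable.snd.comp Computable.snd))
      fun _ _ => rfl
  exact ⟨fun s x => Nat.rec (motive := fun _ => σ) x q s,
    (hQ.comp Computable.snd Computable.fst).to₂, fun _ => rfl, fun _ _ => rfl⟩

end ComputablePredicates

theorem coprime_iff_forall_lt {m d : ℕ} (hd : 0 < d) :
    Nat.Coprime m d ↔ ∀ x < d, ¬ (m % (x + 2) = 0 ∧ d % (x + 2) = 0) := by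
  constructor
  · rintro hcop x - ⟨hm, hd'⟩
    have hdvd := Nat.dvd_gcd (Nat.dvd_of_mod_eq_zero hm) (Nat.dvd_of_mod_eq_zero hd')
    rw [hcop] at hdvd
    have := Nat.le_of_dvd one_pos hdvd
    omega
  · intro hforall
    by_contra hcop
    obtain ⟨p, hp, hpm, hpd⟩ := Nat.Prime.not_coprime_iff_dvd.1 hcop
    have := hp.two_le
    have := Nat.le_of_dvd hd hpd
    refine hforall (p - 2) (by omega) ?_
    rw [Nat.sub_add_cancel hp.two_le]
    exact ⟨Nat.mod_eq_zero_of_dvd hpm, Nat.mod_eq_zero_of_dvd hpd⟩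

theorem computablePred_pos_and_coprime :
    ComputablePred fun p : ℕ × ℕ => 0 < p.2 ∧ Nat.Coprime p.1 p.2 := by
  have mod_eq_zero {f : ℕ × ℕ × ℕ → ℕ} (hf : Primrec f) :
      PrimrecPred fun p : ℕ × ℕ × ℕ => f p % (p.1 + 2) = 0 :=
    Primrec.eq.comp (Primrec.nat_mod.comp hf
      (Primrec.nat_add.comp Primrec.fst (Primrec.const 2))) (Primrec.const 0)
  have not_common_divisor : PrimrecRel fun (x : ℕ) (y : ℕ × ℕ) =>
      ¬ (y.1 % (x + 2) = 0 ∧ y.2 % (x + 2) = 0) :=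
    ((mod_eq_zero (Primrec.fst.comp Primrec.snd)).and
      (mod_eq_zero (Primrec.snd.comp Primrec.snd))).not
  have bounded := computablePred_comp
    (PrimrecPred.computablePred not_common_divisor.forall_mem_list)
    (f := fun p : ℕ × ℕ => (List.range p.2, p))
    ((Primrec.list_range.to_comp.comp Computable.snd).pair Computable.id)
  exact (computablePred_and (computablePred_nat_lt (Computable.const 0) Computable.snd)
    bounded).of_eq fun p => and_congr_right fun hp => by
      simp only [coprime_iff_forall_lt hp, List.mem_range]

theorem computable_subtype_ofNat (s : Set ℕ) [DecidablePred (· ∈ s)] [Infinite s]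
    (hs : ComputablePred (· ∈ s)) : Computable fun n => (Nat.Subtype.ofNat s n : ℕ) := by
  have exists_next (x : ℕ) : ∃ m, x + m + 1 ∈ s := by
    obtain ⟨y, hy, hxy⟩ := (Set.infinite_coe_iff.1 ‹Infinite s›).exists_gt x
    exact ⟨y - x - 1, by rwa [show x + (y - x - 1) + 1 = y by omega]⟩
  have next : Computable fun x : ℕ => x + Nat.find (exists_next x) + 1 :=
    Computable.succ.comp <| Primrec.nat_add.to_comp.comp Computable.id <|
      Computable.find (computablePred_comp hs
        (Computable.succ.comp (Primrec.nat_add.to_comp.comp Computable.fst Computable.snd)))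
        exists_next
  have iterate_next : Computable fun n : ℕ =>
      (n.rec (⊥ : s).val fun _ y => y + Nat.find (exists_next y) + 1 : ℕ) :=
    Computable.nat_rec Computable.id (Computable.const _)
      (next.comp (Computable.snd.comp Computable.snd)).to₂
  refine iterate_next.of_eq fun n => ?_
  induction n with
  | zero => rfl
  | succ n ih => simp only [Nat.Subtype.ofNat, ih]; rfl

section Rat

open Encodable

/-- The code of `q` before renumbering: the `Primcodable` structure on `ℚ` numbers the rationals
in increasing order of these codes. -/
def ratPairCode (q : ℚ) : ℕ := Nat.pair (encode q.num) q.den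

theorem natAbs_eq_encode (z : ℤ) : z.natAbs = (encode z + 1) / 2 := by
  cases z with
  | ofNat n => change n = (2 * n + 1) / 2; omega
  | negSucc n => change n + 1 = (2 * n + 1 + 1) / 2; omega

theorem toNat_eq_encode (z : ℤ) :
    z.toNat = if encode z % 2 = 0 then encode z / 2 else 0 := by
  cases z with
  | ofNat n => change n = if (2 * n) % 2 = 0 then (2 * n) / 2 else 0; split_ifs <;> omega
  | negSucc n => change 0 = if (2 * n + 1) % 2 = 0 then (2 * n + 1) / 2 else 0; split_ifs <;> omega

theorem mem_range_ratPairCode (m : ℕ) : m ∈ Set.range ratPairCode ↔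
    0 < m.unpair.2 ∧ Nat.Coprime ((m.unpair.1 + 1) / 2) m.unpair.2 := by
  constructor
  · rintro ⟨q, rfl⟩
    simp only [ratPairCode, Nat.unpair_pair, ← natAbs_eq_encode]
    exact ⟨q.pos, q.reduced⟩
  · rintro ⟨hpos, hcop⟩
    have hnum : encode (Denumerable.ofNat ℤ m.unpair.1) = m.unpair.1 := Denumerable.encode_ofNat _
    refine ⟨⟨Denumerable.ofNat ℤ m.unpair.1, m.unpair.2, hpos.ne', ?_⟩, ?_⟩
    · rwa [natAbs_eq_encode, hnum]
    · simp only [ratPairCode, hnum, Nat.pair_unpair]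

theorem computable_ratPairCode : Computable ratPairCode := by
  let := decidableRangeEncode ℚ
  let : Infinite (Set.range (encode : ℚ → ℕ)) :=
    Infinite.of_injective _ (Equiv.ofInjective _ encode_injective).injective
  have unpair_fst := Computable.fst.comp Primrec.unpair.to_comp
  have unpair_snd := Computable.snd.comp Primrec.unpair.to_comp
  have range_decidable : ComputablePred (· ∈ Set.range (encode : ℚ → ℕ)) :=
    (computablePred_comp computablePred_pos_and_coprime
      ((Primrec.nat_div.to_comp.comp (Computable.succ.comp unpair_fst)
        (Computable.const 2)).pair unpair_snd)).of_eq fun m => (mem_range_ratPairCode m).symm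
  refine ((computable_subtype_ofNat _ range_decidable).comp
    (Computable.encode (α := ℚ))).of_eq fun q => ?_
  have ofNat_encode : (equivRangeEncode ℚ).symm (Nat.Subtype.ofNat (Set.range (encode : ℚ → ℕ))
      (@encode ℚ Rat.instDenumerable.toEncodable q)) = q :=
    @Denumerable.ofNat_encode ℚ Rat.instDenumerable q
  rw [Equiv.symm_apply_eq] at ofNat_encode
  exact congrArg Subtype.val ofNat_encode

theorem computable_rat_den : Computable fun q : ℚ => q.den :=
  (Computable.snd.comp (Primrec.unpair.to_comp.comp computable_ratPairCode)).of_eq fun q => by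
    simp only [ratPairCode, Nat.unpair_pair]

theorem computable_encode_rat_num : Computable fun q : ℚ => encode q.num :=
  (Computable.fst.comp (Primrec.unpair.to_comp.comp computable_ratPairCode)).of_eq fun q => by
    simp only [ratPairCode, Nat.unpair_pair]

theorem computable_rat_num_toNat : Computable fun q : ℚ => q.num.toNat :=
  (computable_ite (computablePred_eq
      (Primrec.nat_mod.to_comp.comp computable_encode_rat_num (Computable.const 2))
      (Computable.const 0))
    (Primrec.nat_div.to_comp.comp computable_encode_rat_num (Computable.const 2))
    (Computable.const 0)).of_eq fun q => (toNat_eq_encode q.num).symm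

theorem computable_rat_neg_num_toNat : Computable fun q : ℚ => (-q.num).toNat :=
  (Primrec.nat_sub.to_comp.comp
    (Primrec.nat_div.to_comp.comp (Computable.succ.comp computable_encode_rat_num)
      (Computable.const 2))
    computable_rat_num_toNat).of_eq fun q => by rw [Nat.succ_eq_add_one, ← natAbs_eq_encode]; omega

theorem rat_eq_toNat_sub_toNat_div_den (q : ℚ) :
    q = ((q.num.toNat : ℚ) - ((-q.num).toNat : ℚ)) / (q.den : ℚ) := by
  have hnum : q.num = (q.num.toNat : ℤ) - ((-q.num).toNat : ℤ) := by omega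
  conv_lhs => rw [← Rat.num_div_den q]
  congr 1
  exact_mod_cast hnum

theorem rat_eq_div_iff {p n d : ℕ} (hd : d ≠ 0) (q : ℚ) :
    q = ((p : ℚ) - n) / d ↔ q.num.toNat * d + n * q.den = p * q.den + (-q.num).toNat * d := by
  have hden : (q.den : ℚ) ≠ 0 := mod_cast q.den_nz
  have hd' : (d : ℚ) ≠ 0 := mod_cast hd
  conv_lhs => rw [rat_eq_toNat_sub_toNat_div_den q]
  rw [div_eq_div_iff hden hd', ← @Nat.cast_inj ℚ]
  push_cast
  constructor <;> intro h <;> linarith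

variable {α : Type*} [Primcodable α]

theorem computable_of_eq_div {f : α → ℚ} {p n d : α → ℕ} (hp : Computable p) (hn : Computable n)
    (hd : Computable d) (hd0 : ∀ a, d a ≠ 0) (hf : ∀ a, f a = ((p a : ℚ) - n a) / d a) :
    Computable f := by
  let crossMul (a : α) (m : ℕ) : Prop :=
    (Denumerable.ofNat ℚ m).num.toNat * d a + n a * (Denumerable.ofNat ℚ m).den =
      p a * (Denumerable.ofNat ℚ m).den + (-(Denumerable.ofNat ℚ m).num).toNat * d a
  have crossMul_iff (a : α) (m : ℕ) : Denumerable.ofNat ℚ m = f a ↔ crossMul a m := by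
    rw [hf, rat_eq_div_iff (hd0 a)]
  have crossMul_computable : ComputablePred fun x : α × ℕ => crossMul x.1 x.2 := by
    have hq : Computable fun x : α × ℕ => Denumerable.ofNat ℚ x.2 :=
      (Computable.ofNat ℚ).comp Computable.snd
    have mul {f g : α × ℕ → ℕ} (hf : Computable f) (hg : Computable g) :
        Computable fun x => f x * g x := Primrec.nat_mul.to_comp.comp hf hg
    have add {f g : α × ℕ → ℕ} (hf : Computable f) (hg : Computable g) :
        Computable fun x => f x + g x := Primrec.nat_add.to_comp.comp hf hg
    have hden := computable_rat_den.comp hq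
    have hd := hd.comp (Computable.fst (β := ℕ))
    exact computablePred_eq
      (add (mul (computable_rat_num_toNat.comp hq) hd) (mul (hn.comp Computable.fst) hden))
      (add (mul (hp.comp Computable.fst) hden) (mul (computable_rat_neg_num_toNat.comp hq) hd))
  have exists_code (a : α) : ∃ m, crossMul a m :=
    ⟨@encode ℚ Rat.instDenumerable.toEncodable (f a),
      (crossMul_iff a _).1 (@Denumerable.ofNat_encode ℚ Rat.instDenumerable _)⟩
  classical
  exact ((Computable.ofNat ℚ).comp (Computable.find crossMul_computable exists_code)).of_eq
    fun a => (crossMul_iff a _).2 (Nat.find_spec (exists_code a))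

theorem computable_rat_natCast : Computable fun n : ℕ => (n : ℚ) :=
  computable_of_eq_div Computable.id (Computable.const 0) (Computable.const 1)
    (fun _ => one_ne_zero) fun _ => by simp

theorem computable_rat_inv_natCast : Computable fun n : ℕ => (n : ℚ)⁻¹ :=
  computable_of_eq_div
    (computable_ite (computablePred_eq Computable.id (Computable.const 0)) (Computable.const 0)
      (Computable.const 1))
    (Computable.const 0)
    (computable_ite (computablePred_eq Computable.id (Computable.const 0)) (Computable.const 1)
      Computable.id)
    (fun n => by split_ifs <;> simp_all) fun n => by rcases eq_or_ne n 0 with rfl | hn <;> simp_all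

theorem computable_rat_add : Computable₂ fun p q : ℚ => p + q := by
  have num₁ := computable_rat_num_toNat.comp (Computable.fst (α := ℚ) (β := ℚ))
  have num₂ := computable_rat_num_toNat.comp (Computable.snd (α := ℚ) (β := ℚ))
  have neg₁ := computable_rat_neg_num_toNat.comp (Computable.fst (α := ℚ) (β := ℚ))
  have neg₂ := computable_rat_neg_num_toNat.comp (Computable.snd (α := ℚ) (β := ℚ))
  have den₁ := computable_rat_den.comp (Computable.fst (α := ℚ) (β := ℚ))
  have den₂ := computable_rat_den.comp (Computable.snd (α := ℚ) (β := ℚ))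
  have mul := Primrec.nat_mul.to_comp
  have add := Primrec.nat_add.to_comp
  refine computable_of_eq_div (add.comp (mul.comp num₁ den₂) (mul.comp num₂ den₁))
    (add.comp (mul.comp neg₁ den₂) (mul.comp neg₂ den₁)) (mul.comp den₁ den₂)
    (fun x => mul_ne_zero x.1.den_nz x.2.den_nz) fun ⟨p, q⟩ => ?_
  have hp : (p.den : ℚ) ≠ 0 := mod_cast p.den_nz
  have hq : (q.den : ℚ) ≠ 0 := mod_cast q.den_nz
  conv_lhs => rw [rat_eq_toNat_sub_toNat_div_den p, rat_eq_toNat_sub_toNat_div_den q]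
  push_cast
  field_simp
  ring

theorem computable_rat_mul : Computable₂ fun p q : ℚ => p * q := by
  have num₁ := computable_rat_num_toNat.comp (Computable.fst (α := ℚ) (β := ℚ))
  have num₂ := computable_rat_num_toNat.comp (Computable.snd (α := ℚ) (β := ℚ))
  have neg₁ := computable_rat_neg_num_toNat.comp (Computable.fst (α := ℚ) (β := ℚ))
  have neg₂ := computable_rat_neg_num_toNat.comp (Computable.snd (α := ℚ) (β := ℚ))
  have den₁ := computable_rat_den.comp (Computable.fst (α := ℚ) (β := ℚ))
  have den₂ := computable_rat_den.comp (Computable.snd (α := ℚ) (β := ℚ))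
  have mul := Primrec.nat_mul.to_comp
  have add := Primrec.nat_add.to_comp
  refine computable_of_eq_div (add.comp (mul.comp num₁ num₂) (mul.comp neg₁ neg₂))
    (add.comp (mul.comp num₁ neg₂) (mul.comp neg₁ num₂)) (mul.comp den₁ den₂)
    (fun x => mul_ne_zero x.1.den_nz x.2.den_nz) fun ⟨p, q⟩ => ?_
  have hp : (p.den : ℚ) ≠ 0 := mod_cast p.den_nz
  have hq : (q.den : ℚ) ≠ 0 := mod_cast q.den_nz
  conv_lhs => rw [rat_eq_toNat_sub_toNat_div_den p, rat_eq_toNat_sub_toNat_div_den q]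
  push_cast
  field_simp
  ring

theorem computable_rat_neg : Computable fun q : ℚ => -q :=
  (computable_rat_mul.comp (Computable.const (-1)) Computable.id).of_eq fun q => neg_one_mul q

theorem computable_rat_sub : Computable₂ fun p q : ℚ => p - q :=
  (computable_rat_add.comp Computable.fst (computable_rat_neg.comp Computable.snd)).of_eq
    fun x => (sub_eq_add_neg x.1 x.2).symm

theorem computablePred_rat_le {f g : α → ℚ} (hf : Computable f) (hg : Computable g) :
    ComputablePred fun a => f a ≤ g a :=
  (computablePred_eq (computable_rat_neg_num_toNat.comp (computable_rat_sub.comp hg hf))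
    (Computable.const 0)).of_eq fun a => by rw [← sub_nonneg, ← Rat.num_nonneg]; omega

theorem computablePred_rat_lt {f g : α → ℚ} (hf : Computable f) (hg : Computable g) :
    ComputablePred fun a => f a < g a :=
  (computablePred_rat_le hg hf).not.of_eq fun _ => not_le

theorem computable_rat_max : Computable₂ fun p q : ℚ => max p q :=
  (computable_ite (computablePred_rat_le Computable.fst Computable.snd) Computable.snd
    Computable.fst).of_eq fun x => (max_def x.1 x.2).symm

end Rat

/-! ### Recursively enumerable predicates and the diagonal function -/

section RecursivelyEnumerable

open Encodable Nat.Partrec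

variable {α β : Type*} [Primcodable α] [Primcodable β]

theorem exists_computablePred_of_rePred {p : α → Prop} (hp : REPred p) :
    ∃ R : α × ℕ → Prop, ComputablePred R ∧ ∀ a, p a ↔ ∃ k, R (a, k) := by
  obtain ⟨c, hc⟩ := Code.exists_code.1 hp
  refine ⟨fun x => (Code.evaln x.2 c (encode x.1)).isSome = true, ?_, fun a => ?_⟩
  · exact Computable.computablePred <| (Primrec.option_isSome.to_comp.comp
      (Code.primrec_evaln.to_comp.comp ((Computable.snd.pair (Computable.const c)).pair
        (Computable.encode.comp Computable.fst)))).of_eq fun _ => by simp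
  · have eval_dom : p a ↔ (c.eval (encode a)).Dom := by
      rw [hc]
      simp [Part.bind, Part.assert]
    simp only [eval_dom, Part.dom_iff_mem, Code.evaln_complete, Option.isSome_iff_exists]
    exact exists_comm

theorem rePred_exists_of_computablePred {R : α × β → Prop} (hR : ComputablePred R) :
    REPred fun a => ∃ b, R (a, b) := by
  obtain ⟨c, hc, rfl⟩ := ComputablePred.computable_iff.1 hR
  have test : Computable₂ fun (a : α) (n : ℕ) =>
      (Option.casesOn (decode (α := β) n) false fun b => c (a, b) : Bool) :=
    Computable.option_casesOn (Computable.decode.comp Computable.snd) (Computable.const false)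
      (hc.comp ((Computable.fst.comp Computable.fst).pair Computable.snd))
  refine (Partrec.rfind test.partrec₂).dom_re.of_eq fun a => Nat.rfind_dom'.trans ?_
  constructor
  · rintro ⟨n, hn, -⟩
    cases hd : decode (α := β) n with
    | none => simp [hd] at hn
    | some b => exact ⟨b, by simpa [hd] using hn⟩
  · rintro ⟨b, hb⟩
    exact ⟨encode b, by simpa using hb.symm, fun _ => trivial⟩

theorem rePred_comp {p : β → Prop} (hp : REPred p) {f : α → β} (hf : Computable f) :
    REPred fun a => p (f a) :=
  Partrec.comp hp hf

theorem rePred_exists {R : α × β → Prop} (hR : REPred R) : REPred fun a => ∃ b, R (a, b) := by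
  obtain ⟨C, hC, hRC⟩ := exists_computablePred_of_rePred hR
  have hC' : ComputablePred fun x : α × β × ℕ => C ((x.1, x.2.1), x.2.2) :=
    computablePred_comp hC ((Computable.fst.pair (Computable.fst.comp Computable.snd)).pair
      (Computable.snd.comp Computable.snd))
  exact (rePred_exists_of_computablePred hC').of_eq fun a => by simp [hRC, Prod.exists]

theorem rePred_and {p q : α → Prop} (hp : REPred p) (hq : REPred q) :
    REPred fun a => p a ∧ q a := by
  obtain ⟨C, hC, hpC⟩ := exists_computablePred_of_rePred hp
  obtain ⟨D, hD, hqD⟩ := exists_computablePred_of_rePred hq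
  have hCD : ComputablePred fun x : α × ℕ × ℕ => C (x.1, x.2.1) ∧ D (x.1, x.2.2) :=
    computablePred_and
      (computablePred_comp hC (Computable.fst.pair (Computable.fst.comp Computable.snd)))
      (computablePred_comp hD (Computable.fst.pair (Computable.snd.comp Computable.snd)))
  exact (rePred_exists_of_computablePred hCD).of_eq fun a => by simp [hpC, hqD, Prod.exists]

end RecursivelyEnumerable

section Diagonal

open Encodable Nat.Partrec

/-- The result of running the `e`-th program on input `e` for `s` steps. -/
def diagonalEval (s e : ℕ) : Option ℕ := Code.evaln s (Denumerable.ofNat Code e) e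

theorem computable_diagonalEval : Computable₂ diagonalEval :=
  Code.primrec_evaln.to_comp.comp
    ((Computable.fst.pair ((Computable.ofNat Code).comp Computable.snd)).pair Computable.snd)

theorem diagonalEval_mono {s s' e x : ℕ} (hs : s ≤ s') (hx : diagonalEval s e = some x) :
    diagonalEval s' e = some x :=
  Code.evaln_mono hs hx

theorem diagonalEval_zero_ne_some (e x : ℕ) : diagonalEval 0 e ≠ some x :=
  fun h => (Code.evaln_bound h).not_ge (Nat.zero_le e)

theorem diagonalEval_inj {s s' e x x' : ℕ} (hx : diagonalEval s e = some x)
    (hx' : diagonalEval s' e = some x') : x = x' :=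
  Option.some_injective _ <| (diagonalEval_mono (le_max_left s s') hx).symm.trans
    (diagonalEval_mono (le_max_right s s') hx')

theorem exists_mem_iff_diagonalEval_eq_some {g : ℕ →. ℕ} (hg : Nat.Partrec g) :
    ∃ e, ∀ x, x ∈ g e ↔ ∃ s, diagonalEval s e = some x := by
  obtain ⟨c, rfl⟩ := Code.exists_code.1 hg
  refine ⟨encode c, fun x => ?_⟩
  rw [Code.evaln_complete]
  simp [diagonalEval]

theorem not_rePred_forall_diagonalEval_ne_zero :
    ¬ REPred fun e => ∀ s, diagonalEval s e ≠ some 0 := by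
  intro hre
  have zero_off : Partrec fun e : ℕ =>
      (Part.assert (∀ s, diagonalEval s e ≠ some 0) fun _ => Part.some ()).map fun _ => (0 : ℕ) :=
    Partrec.map hre (Computable.const 0).to₂
  obtain ⟨e, he⟩ := exists_mem_iff_diagonalEval_eq_some (Partrec.nat_iff.1 zero_off)
  have self_refuting : (∀ s, diagonalEval s e ≠ some 0) ↔ ∃ s, diagonalEval s e = some 0 := by
    simpa using he 0
  grind

theorem not_computable_of_separates_diagonalEval {a : ℕ → Bool}
    (ha0 : ∀ e s, diagonalEval s e = some 0 → a e = true)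
    (ha1 : ∀ e s, diagonalEval s e = some 1 → a e = false) : ¬ Computable a := by
  intro ha
  obtain ⟨e, he⟩ := exists_mem_iff_diagonalEval_eq_some
    (Partrec.nat_iff.1 (ha.cond (Computable.const 1) (Computable.const 0)).partrec)
  obtain ⟨s, hs⟩ := (he (bif a e then 1 else 0)).1 (Part.mem_some _)
  cases hae : a e with
  | true => simp [ha1 e s (by simpa [hae] using hs)] at hae
  | false => simp [ha0 e s (by simpa [hae] using hs)] at hae

open Classical in
/-- An enumeration of `{e | ∃ s, diagonalEval s e = some 0}` without repetition, padded by the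
values `s` at the indices `s` at which nothing is enumerated. -/
noncomputable def diagonalEntry (s : ℕ) : ℕ :=
  if diagonalEval (s.unpair.2 + 1) s.unpair.1 = some 0 ∧ diagonalEval s.unpair.2 s.unpair.1 ≠ some 0
  then s.unpair.1 else s

theorem computable_diagonalEntry : Computable diagonalEntry := by
  have unpair_fst := Computable.fst.comp Primrec.unpair.to_comp
  have unpair_snd := Computable.snd.comp Primrec.unpair.to_comp
  exact computable_ite (computablePred_and
      (computablePred_eq (computable_diagonalEval.comp (Computable.succ.comp unpair_snd) unpair_fst)
        (Computable.const _))
      (computablePred_eq (computable_diagonalEval.comp unpair_snd unpair_fst)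
        (Computable.const _)).not)
    unpair_fst Computable.id

theorem subsingleton_diagonalEntry_eq_of_ne (e : ℕ) :
    {s | diagonalEntry s = e ∧ s ≠ e}.Subsingleton := by
  have entered {s : ℕ} (hs : diagonalEntry s = e ∧ s ≠ e) : s.unpair.1 = e ∧
      diagonalEval (s.unpair.2 + 1) e = some 0 ∧ diagonalEval s.unpair.2 e ≠ some 0 := by
    obtain ⟨hse, hne⟩ := hs
    unfold diagonalEntry at hse
    split_ifs at hse with hcond
    · exact ⟨hse, hse ▸ hcond⟩
    · exact absurd hse hne
  intro s hs s' hs'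
  obtain ⟨he, hin, hout⟩ := entered hs
  obtain ⟨he', hin', hout'⟩ := entered hs'
  have hle : s.unpair.2 ≤ s'.unpair.2 := not_lt.1 fun h => hout (diagonalEval_mono h hin')
  have hle' : s'.unpair.2 ≤ s.unpair.2 := not_lt.1 fun h => hout' (diagonalEval_mono h hin)
  rw [← Nat.pair_unpair s, ← Nat.pair_unpair s', he, he', le_antisymm hle hle']

theorem tendsto_diagonalEntry : Filter.Tendsto diagonalEntry Filter.atTop Filter.atTop := by
  rw [← Nat.cofinite_eq_atTop]
  refine Filter.Tendsto.cofinite_of_finite_preimage_singleton fun e => ?_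
  refine ((Set.finite_singleton e).union
    (subsingleton_diagonalEntry_eq_of_ne e).finite).subset fun s hs => ?_
  rcases eq_or_ne s e with rfl | hne
  · exact .inl rfl
  · exact .inr ⟨hs, hne⟩

theorem exists_diagonalEntry_eq {e s s' : ℕ} (hs : diagonalEval s e ≠ some 0)
    (hs' : diagonalEval s' e = some 0) : ∃ r ≥ s, diagonalEntry r = e := by
  classical
  have hex : ∃ m, diagonalEval m e = some 0 := ⟨s', hs'⟩
  obtain ⟨m, hm⟩ : ∃ m, Nat.find hex = m + 1 := Nat.exists_eq_add_one_of_ne_zero fun h0 =>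
    diagonalEval_zero_ne_some e 0 ((Nat.find_eq_zero hex).1 h0)
  have hin : diagonalEval (m + 1) e = some 0 := hm ▸ Nat.find_spec hex
  have hout : diagonalEval m e ≠ some 0 := Nat.find_min hex (by omega)
  have hsm : s ≤ m := not_lt.1 fun hlt => hs (diagonalEval_mono hlt hin)
  refine ⟨Nat.pair e m, hsm.trans (Nat.right_le_pair e m), ?_⟩
  rw [diagonalEntry, if_pos (by simpa only [Nat.unpair_pair] using ⟨hin, hout⟩), Nat.unpair_pair]

theorem not_rePred_of_diagonalEntry_ne {R : ℕ × ℕ → Prop} (hex : ∀ e, ∃ s, R (e, s))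
    (hR : ∀ e s, R (e, s) → ∀ r ≥ s, diagonalEntry r ≠ e) : ¬ REPred R := by
  intro hre
  have not_yet : ComputablePred fun x : ℕ × ℕ => diagonalEval x.2 x.1 ≠ some 0 :=
    (computablePred_eq (computable_diagonalEval.comp Computable.snd Computable.fst)
      (Computable.const _)).not
  refine not_rePred_forall_diagonalEval_ne_zero
    ((rePred_exists (rePred_and hre not_yet.to_re)).of_eq fun e => ⟨?_, fun hne => ?_⟩)
  · rintro ⟨s, hRs, hs⟩ s' hs'
    obtain ⟨r, hr, hre⟩ := exists_diagonalEntry_eq hs hs'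
    exact hR e s hRs r hr hre
  · obtain ⟨s, hs⟩ := hex e
    exact ⟨s, hs, hne s⟩

end Diagonal

/-! ### Computably Lipschitz families of functions on the plane -/

/-- The point of the plane with the given rational coordinates. -/
def ratPoint (p : ℚ × ℚ) : ℝ × ℝ := (p.1, p.2)

theorem dense_range_ratPoint : DenseRange ratPoint :=
  Rat.isDenseEmbedding_coe_real.dense.prodMap Rat.isDenseEmbedding_coe_real.dense

section Ball

variable {K : ℕ} {g : ℝ × ℝ → ℝ}

theorem pos_of_mem_ballOfCode (hg : LipschitzWith K g) {z : ℝ × ℝ} {c : (ℚ × ℚ) × ℚ}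
    (hz : z ∈ ballOfCode c) (hc : K * (c.2 : ℝ) < g (ratPoint c.1)) : 0 < g z := by
  have hdist : g (ratPoint c.1) - g z ≤ K * dist z (ratPoint c.1) := by
    rw [dist_comm]
    exact (le_abs_self _).trans (hg.dist_le_mul (ratPoint c.1) z)
  have hle : K * dist z (ratPoint c.1) ≤ K * (c.2 : ℝ) :=
    mul_le_mul_of_nonneg_left (le_of_lt hz) K.cast_nonneg
  linarith

theorem exists_mem_ballOfCode_of_pos (hg : LipschitzWith K g) {z : ℝ × ℝ} (hz : 0 < g z) :
    ∃ c, z ∈ ballOfCode c ∧ K * (c.2 : ℝ) < g (ratPoint c.1) := by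
  obtain ⟨r, hr0, hr⟩ : ∃ r : ℚ, (0 : ℝ) < r ∧ (r : ℝ) < g z / (2 * (K + 1)) :=
    exists_rat_btwn (by positivity)
  obtain ⟨p, hp⟩ := dense_range_ratPoint.exists_dist_lt z hr0
  refine ⟨(p, r), hp, ?_⟩
  have hdist : g z - g (ratPoint p) ≤ K * dist z (ratPoint p) :=
    (le_abs_self _).trans (hg.dist_le_mul z (ratPoint p))
  have hle : K * dist z (ratPoint p) ≤ K * (r : ℝ) :=
    mul_le_mul_of_nonneg_left hp.le K.cast_nonneg
  rw [lt_div_iff₀ (by positivity)] at hr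
  linarith

theorem pos_iff_exists_mem_ballOfCode (hg : LipschitzWith K g) (z : ℝ × ℝ) :
    0 < g z ↔ ∃ c, z ∈ ballOfCode c ∧ K * (c.2 : ℝ) < g (ratPoint c.1) :=
  ⟨exists_mem_ballOfCode_of_pos hg, fun ⟨_, hz, hc⟩ => pos_of_mem_ballOfCode hg hz hc⟩

end Ball

section Families

variable {α β : Type*} [Primcodable α] [Primcodable β]

/-- A family of real functions on the plane whose values at rational points are rational numbers
and, like some Lipschitz constants, are computed uniformly in the parameter. -/
def ComputablyLipschitz (g : α → ℝ × ℝ → ℝ) : Prop :=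
  ∃ (q : α → ℚ × ℚ → ℚ) (L : α → ℕ), Computable₂ q ∧ Computable L ∧
    (∀ a p, (q a p : ℝ) = g a (ratPoint p)) ∧ ∀ a, LipschitzWith (L a) (g a)

/-- A family of self-maps of the plane both of whose coordinates are computably Lipschitz. -/
def ComputablyLipschitzMap (G : α → ℝ × ℝ → ℝ × ℝ) : Prop :=
  ComputablyLipschitz (fun a z => (G a z).1) ∧ ComputablyLipschitz fun a z => (G a z).2

namespace ComputablyLipschitz

variable {g h : α → ℝ × ℝ → ℝ}

theorem of_eq (hg : ComputablyLipschitz g) (H : ∀ a z, g a z = h a z) :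
    ComputablyLipschitz h :=
  (funext₂ H : g = h) ▸ hg

theorem continuous (hg : ComputablyLipschitz g) (a : α) : Continuous (g a) := by
  obtain ⟨-, L, -, -, -, hL⟩ := hg
  exact (hL a).continuous

theorem exists_computablePred_ball (hg : ComputablyLipschitz g) :
    ∃ L : α → ℕ, (∀ a, LipschitzWith (L a) (g a)) ∧
      ComputablePred fun x : α × (ℚ × ℚ) × ℚ => L x.1 * (x.2.2 : ℝ) < g x.1 (ratPoint x.2.1) := by
  obtain ⟨q, L, hq, hL, hqg, hLip⟩ := hg
  have radius : Computable fun x : α × (ℚ × ℚ) × ℚ => (L x.1 : ℚ) * x.2.2 :=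
    computable_rat_mul.comp (computable_rat_natCast.comp (hL.comp Computable.fst))
      (Computable.snd.comp Computable.snd)
  have value : Computable fun x : α × (ℚ × ℚ) × ℚ => q x.1 x.2.1 :=
    hq.comp Computable.fst (Computable.fst.comp Computable.snd)
  refine ⟨L, hLip, (computablePred_rat_lt radius value).of_eq fun x => ?_⟩
  rw [← hqg]
  exact_mod_cast Iff.rfl

theorem isPi01Closed_setOf_nonpos (hg : ComputablyLipschitz g) :
    IsPi01Closed {z | ∀ a, g a z ≤ 0} := by
  obtain ⟨L, hL, hcomp⟩ := hg.exists_computablePred_ball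
  refine ⟨fun c => ∃ a, L a * (c.2 : ℝ) < g a (ratPoint c.1),
    rePred_exists_of_computablePred (computablePred_comp hcomp
      (Computable.snd.pair Computable.fst)), ?_⟩
  ext z
  simp only [Set.mem_ofPred_eq, Set.mem_sdiff, Set.mem_univ, true_and, Set.mem_iUnion,
    exists_prop, not_exists, ← not_lt, pos_iff_exists_mem_ballOfCode (hL _) z]
  grind

theorem rePred_pos (hg : ComputablyLipschitz g) {z : ℝ × ℝ} (hz : IsComputablePoint z) :
    REPred fun a => 0 < g a z := by
  obtain ⟨L, hL, hcomp⟩ := hg.exists_computablePred_ball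
  exact (rePred_exists (rePred_and (rePred_comp hz Computable.snd) hcomp.to_re)).of_eq
    fun a => (pos_iff_exists_mem_ballOfCode (hL a) z).symm

theorem reindex (hg : ComputablyLipschitz g) {f : β → α} (hf : Computable f) :
    ComputablyLipschitz fun b => g (f b) := by
  obtain ⟨q, L, hq, hL, hqg, hLip⟩ := hg
  exact ⟨fun b => q (f b), fun b => L (f b), hq.comp (hf.comp Computable.fst) Computable.snd,
    hL.comp hf, fun b => hqg (f b), fun b => hLip (f b)⟩

theorem fst : ComputablyLipschitz fun (_ : α) z => z.1 :=
  ⟨fun _ p => p.1, fun _ => 1, Computable.fst.comp Computable.snd, Computable.const 1,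
    fun _ _ => rfl, fun _ => by simpa using LipschitzWith.prod_fst⟩

theorem snd : ComputablyLipschitz fun (_ : α) z => z.2 :=
  ⟨fun _ p => p.2, fun _ => 1, Computable.snd.comp Computable.snd, Computable.const 1,
    fun _ _ => rfl, fun _ => by simpa using LipschitzWith.prod_snd⟩

theorem ratCast {c : α → ℚ} (hc : Computable c) : ComputablyLipschitz fun a _ => (c a : ℝ) :=
  ⟨fun a _ => c a, fun _ => 0, hc.comp Computable.fst, Computable.const 0, fun _ _ => rfl,
    fun _ => by simp⟩

theorem natCast {n : α → ℕ} (hn : Computable n) : ComputablyLipschitz fun a _ => (n a : ℝ) :=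
  (ratCast (computable_rat_natCast.comp hn)).of_eq fun _ _ => Rat.cast_natCast _

theorem ofNat (n : ℕ) [n.AtLeastTwo] :
    ComputablyLipschitz fun (_ : α) _ => (OfNat.ofNat n : ℝ) :=
  (natCast (Computable.const n)).of_eq fun _ _ => Nat.cast_ofNat

theorem zero : ComputablyLipschitz fun (_ : α) _ => (0 : ℝ) :=
  (natCast (Computable.const 0)).of_eq fun _ _ => Nat.cast_zero

theorem one : ComputablyLipschitz fun (_ : α) _ => (1 : ℝ) :=
  (natCast (Computable.const 1)).of_eq fun _ _ => Nat.cast_one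

theorem add (hg : ComputablyLipschitz g) (hh : ComputablyLipschitz h) :
    ComputablyLipschitz fun a z => g a z + h a z := by
  obtain ⟨q, L, hq, hL, hqg, hLip⟩ := hg
  obtain ⟨r, M, hr, hM, hrh, hMip⟩ := hh
  refine ⟨fun a p => q a p + r a p, fun a => L a + M a, computable_rat_add.comp hq hr,
    Primrec.nat_add.to_comp.comp hL hM, fun a p => ?_, fun a => ?_⟩
  · simp only [Rat.cast_add, hqg, hrh]
  · simpa only [Nat.cast_add] using (hLip a).add (hMip a)

theorem max (hg : ComputablyLipschitz g) (hh : ComputablyLipschitz h) :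
    ComputablyLipschitz fun a z => max (g a z) (h a z) := by
  obtain ⟨q, L, hq, hL, hqg, hLip⟩ := hg
  obtain ⟨r, M, hr, hM, hrh, hMip⟩ := hh
  refine ⟨fun a p => Max.max (q a p) (r a p), fun a => Max.max (L a) (M a),
    computable_rat_max.comp hq hr, Primrec.nat_max.to_comp.comp hL hM, fun a p => ?_, fun a => ?_⟩
  · simp only [Rat.cast_max, hqg, hrh]
  · simpa only [Nat.cast_max] using (hLip a).max (hMip a)

theorem ratCast_mul {c : α → ℚ} (hc : Computable c) (hg : ComputablyLipschitz g) :
    ComputablyLipschitz fun a z => (c a : ℝ) * g a z := by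
  obtain ⟨q, L, hq, hL, hqg, hLip⟩ := hg
  let bound (c : ℚ) : ℕ := c.num.toNat + (-c.num).toNat
  have abs_le_bound (c : ℚ) : |(c : ℝ)| ≤ bound c := by
    have hnat : |c.num| ≤ (bound c : ℤ) := by simp only [bound]; grind
    have hone : (1 : ℝ) ≤ c.den := mod_cast c.pos
    rw [Rat.cast_def, abs_div, Nat.abs_cast]
    exact (div_le_self (abs_nonneg _) hone).trans (mod_cast hnat)
  have bound_computable : Computable fun a => bound (c a) :=
    Primrec.nat_add.to_comp.comp (computable_rat_num_toNat.comp hc)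
      (computable_rat_neg_num_toNat.comp hc)
  refine ⟨fun a p => c a * q a p, fun a => bound (c a) * L a,
    computable_rat_mul.comp (hc.comp Computable.fst) hq,
    Primrec.nat_mul.to_comp.comp bound_computable hL, fun a p => ?_, fun a => ?_⟩
  · simp only [Rat.cast_mul, hqg]
  · refine LipschitzWith.of_dist_le_mul fun x y => ?_
    calc dist ((c a : ℝ) * g a x) (c a * g a y) = |(c a : ℝ)| * dist (g a x) (g a y) := by
          rw [Real.dist_eq, Real.dist_eq, ← mul_sub, abs_mul]
      _ ≤ bound (c a) * (L a * dist x y) :=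
          mul_le_mul (abs_le_bound _) ((hLip a).dist_le_mul x y) dist_nonneg (Nat.cast_nonneg _)
      _ = _ := by push_cast; ring

theorem natCast_mul {n : α → ℕ} (hn : Computable n) (hg : ComputablyLipschitz g) :
    ComputablyLipschitz fun a z => (n a : ℝ) * g a z :=
  (hg.ratCast_mul (computable_rat_natCast.comp hn)).of_eq fun _ _ => by rw [Rat.cast_natCast]

theorem ofNat_mul (n : ℕ) [n.AtLeastTwo] (hg : ComputablyLipschitz g) :
    ComputablyLipschitz fun a z => (OfNat.ofNat n : ℝ) * g a z :=
  (hg.natCast_mul (Computable.const n)).of_eq fun _ _ => congrArg (· * _) Nat.cast_ofNat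

theorem div_natCast {n : α → ℕ} (hn : Computable n) (hg : ComputablyLipschitz g) :
    ComputablyLipschitz fun a z => g a z / (n a : ℝ) :=
  (hg.ratCast_mul (computable_rat_inv_natCast.comp hn)).of_eq fun _ _ => by
    rw [Rat.cast_inv, Rat.cast_natCast, inv_mul_eq_div]

theorem div_ofNat (n : ℕ) [n.AtLeastTwo] (hg : ComputablyLipschitz g) :
    ComputablyLipschitz fun a z => g a z / (OfNat.ofNat n : ℝ) :=
  (hg.div_natCast (Computable.const n)).of_eq fun _ _ => congrArg (_ / ·) Nat.cast_ofNat

theorem neg (hg : ComputablyLipschitz g) : ComputablyLipschitz fun a z => -g a z :=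
  (hg.ratCast_mul (Computable.const (-1))).of_eq fun _ _ => by simp

theorem sub (hg : ComputablyLipschitz g) (hh : ComputablyLipschitz h) :
    ComputablyLipschitz fun a z => g a z - h a z :=
  (hg.add hh.neg).of_eq fun _ _ => (sub_eq_add_neg _ _).symm

theorem min (hg : ComputablyLipschitz g) (hh : ComputablyLipschitz h) :
    ComputablyLipschitz fun a z => min (g a z) (h a z) :=
  (hg.neg.max hh.neg).neg.of_eq fun _ _ => by rw [max_neg_neg, neg_neg]

theorem ite {p : α → Prop} [DecidablePred p] (hp : ComputablePred p)
    (hg : ComputablyLipschitz g) (hh : ComputablyLipschitz h) :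
    ComputablyLipschitz fun a z => if p a then g a z else h a z := by
  obtain ⟨q, L, hq, hL, hqg, hLip⟩ := hg
  obtain ⟨r, M, hr, hM, hrh, hMip⟩ := hh
  refine ⟨fun a x => if p a then q a x else r a x, fun a => if p a then L a else M a,
    computable_ite (computablePred_comp hp Computable.fst) hq hr, computable_ite hp hL hM,
    fun a x => ?_, fun a => ?_⟩
  · by_cases ha : p a
    · simp only [if_pos ha, hqg]
    · simp only [if_neg ha, hrh]
  · by_cases ha : p a
    · simpa only [if_pos ha] using hLip a
    · simpa only [if_neg ha] using hMip a

end ComputablyLipschitz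

namespace ComputablyLipschitzMap

variable {G : α → ℝ × ℝ → ℝ × ℝ}

theorem exists_computable_lipschitzWith (hG : ComputablyLipschitzMap G) :
    ∃ (q : α → ℚ × ℚ → ℚ × ℚ) (L : α → ℕ), Computable₂ q ∧ Computable L ∧
      (∀ a p, ratPoint (q a p) = G a (ratPoint p)) ∧ ∀ a, LipschitzWith (L a) (G a) := by
  obtain ⟨⟨q, L, hq, hL, hqG, hLip⟩, r, M, hr, hM, hrG, hMip⟩ := hG
  refine ⟨fun a p => (q a p, r a p), fun a => max (L a) (M a), Computable.pair hq hr,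
    Primrec.nat_max.to_comp.comp hL hM, fun a p => Prod.ext (hqG a p) (hrG a p), fun a => ?_⟩
  simpa only [Nat.cast_max] using (hLip a).prodMk (hMip a)

theorem of_exists {q : α → ℚ × ℚ → ℚ × ℚ} {L : α → ℕ} (hq : Computable₂ q) (hL : Computable L)
    (hqG : ∀ a p, ratPoint (q a p) = G a (ratPoint p)) (hLip : ∀ a, LipschitzWith (L a) (G a)) :
    ComputablyLipschitzMap G :=
  ⟨⟨fun a p => (q a p).1, L, Computable.fst.comp hq, hL, fun a p => congrArg Prod.fst (hqG a p),
      fun a => by simpa [Function.comp_def] using LipschitzWith.prod_fst.comp (hLip a)⟩,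
    ⟨fun a p => (q a p).2, L, Computable.snd.comp hq, hL, fun a p => congrArg Prod.snd (hqG a p),
      fun a => by simpa [Function.comp_def] using LipschitzWith.prod_snd.comp (hLip a)⟩⟩

theorem continuous (hG : ComputablyLipschitzMap G) (a : α) : Continuous (G a) :=
  (hG.1.continuous a).prodMk (hG.2.continuous a)

theorem reindex (hG : ComputablyLipschitzMap G) {f : β → α} (hf : Computable f) :
    ComputablyLipschitzMap fun b => G (f b) :=
  ⟨hG.1.reindex hf, hG.2.reindex hf⟩

theorem recurrence {G H : ℕ → ℝ × ℝ → ℝ × ℝ} (hG : ComputablyLipschitzMap G)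
    (hH0 : ∀ z, H 0 z = z) (hH : ∀ s z, H (s + 1) z = G s (H s z)) :
    ComputablyLipschitzMap H := by
  obtain ⟨q, L, hq, hL, hqG, hLip⟩ := hG.exists_computable_lipschitzWith
  obtain ⟨Q, hQ, hQ0, hQs⟩ := exists_computable_recurrence hq
  obtain ⟨K, hK, hK0, hKs⟩ := exists_computable_recurrence (q := fun s k => L s * k)
    (Primrec.nat_mul.to_comp.comp (hL.comp Computable.fst) Computable.snd)
  have hK1 : Computable fun s => K s 1 := hK.comp Computable.id (Computable.const 1)
  refine of_exists hQ hK1 (fun s p => ?_) fun s => ?_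
  · induction s with
    | zero => rw [hQ0, hH0]
    | succ s ih => rw [hQs, hH, hqG, ih]
  · induction s with
    | zero => simpa only [funext hH0, hK0, Nat.cast_one] using! LipschitzWith.id
    | succ s ih =>
      simpa only [funext (hH s), hKs, Nat.cast_mul, Function.comp_def] using (hLip s).comp ih

end ComputablyLipschitzMap

theorem ComputablyLipschitz.comp {g : α → ℝ × ℝ → ℝ} (hg : ComputablyLipschitz g)
    {G : α → ℝ × ℝ → ℝ × ℝ} (hG : ComputablyLipschitzMap G) :
    ComputablyLipschitz fun a z => g a (G a z) := by
  obtain ⟨q, L, hq, hL, hqg, hLip⟩ := hg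
  obtain ⟨r, M, hr, hM, hrG, hMip⟩ := hG.exists_computable_lipschitzWith
  refine ⟨fun a p => q a (r a p), fun a => L a * M a, hq.comp Computable.fst hr,
    Primrec.nat_mul.to_comp.comp hL hM, fun a p => ?_, fun a => ?_⟩
  · rw [hqg, hrG]
  · simpa only [Nat.cast_mul, Function.comp_def] using (hLip a).comp (hMip a)

theorem ComputablyLipschitzMap.comp {F G : α → ℝ × ℝ → ℝ × ℝ} (hF : ComputablyLipschitzMap F)
    (hG : ComputablyLipschitzMap G) : ComputablyLipschitzMap fun a z => F a (G a z) :=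
  ⟨hF.1.comp hG, hF.2.comp hG⟩

end Families

/-! ### The stage map -/

section Reparam

/-- The increasing bijection of the line that a stage applies to the arc length: slope `1` up to
height `k`, then a contraction of the bend onto the heights between `k` and `k + 2`, then slope
`E`. -/
noncomputable def reparam (E n k S : ℝ) : ℝ :=
  max (min (n + 2 + S) (k + 2 * (S + (n + 2 - k)) / (2 * (n - k) + 3)))
    (k + 2 + E * (S - (n - k + 1)))

/-- The inverse of `reparam`. -/
noncomputable def reparamInv (E n k t : ℝ) : ℝ :=
  min (max (t - (n + 2)) (k - (n + 2) + (t - k) * (2 * (n - k) + 3) / 2))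
    (n - k + 1 + (t - k - 2) / E)

variable {E n k S t : ℝ}

theorem reparam_le_iff (hE : 0 < E) (hkn : k ≤ n) :
    reparam E n k S ≤ t ↔ S ≤ reparamInv E n k t := by
  have hlen : 0 < 2 * (n - k) + 3 := by linarith
  have hleft : n + 2 + S ≤ t ↔ S ≤ t - (n + 2) := by grind
  have hmid : k + 2 * (S + (n + 2 - k)) / (2 * (n - k) + 3) ≤ t ↔
      S ≤ k - (n + 2) + (t - k) * (2 * (n - k) + 3) / 2 := by
    rw [← le_sub_iff_add_le', div_le_iff₀ hlen]
    grind
  have hright : k + 2 + E * (S - (n - k + 1)) ≤ t ↔ S ≤ n - k + 1 + (t - k - 2) / E := by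
    rw [← sub_le_iff_le_add', le_div_iff₀ hE]
    grind
  rw [reparam, reparamInv, max_le_iff, min_le_iff, le_min_iff, le_max_iff, hleft, hmid, hright]

theorem le_reparam_iff (hE : 0 < E) (hkn : k ≤ n) :
    t ≤ reparam E n k S ↔ reparamInv E n k t ≤ S := by
  have hlen : 0 < 2 * (n - k) + 3 := by linarith
  have hleft : t ≤ n + 2 + S ↔ t - (n + 2) ≤ S := by grind
  have hmid : t ≤ k + 2 * (S + (n + 2 - k)) / (2 * (n - k) + 3) ↔
      k - (n + 2) + (t - k) * (2 * (n - k) + 3) / 2 ≤ S := by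
    rw [← sub_le_iff_le_add', le_div_iff₀ hlen]
    grind
  have hright : t ≤ k + 2 + E * (S - (n - k + 1)) ↔ n - k + 1 + (t - k - 2) / E ≤ S := by
    rw [← le_sub_iff_add_le', div_le_iff₀ hE]
    grind
  rw [reparam, reparamInv, le_max_iff, le_min_iff, min_le_iff, max_le_iff, hleft, hmid, hright]

theorem reparam_reparamInv (hE : 0 < E) (hkn : k ≤ n) :
    reparam E n k (reparamInv E n k t) = t :=
  le_antisymm ((reparam_le_iff hE hkn).2 le_rfl) ((le_reparam_iff hE hkn).2 le_rfl)

theorem reparamInv_reparam (hE : 0 < E) (hkn : k ≤ n) :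
    reparamInv E n k (reparam E n k S) = S :=
  le_antisymm ((le_reparam_iff hE hkn).1 le_rfl) ((reparam_le_iff hE hkn).1 le_rfl)

theorem le_div_of_nonpos_of_one_le {a : ℝ} (ha : a ≤ 0) (hE : 1 ≤ E) : a ≤ a / E := by
  rw [le_div_iff₀ (by linarith)]
  nlinarith

theorem reparamInv_of_le (hE : 1 ≤ E) (hkn : k ≤ n) (ht : t ≤ k) :
    reparamInv E n k t = t - (n + 2) := by
  have hmul : (t - k) * (2 * (n - k) + 3) ≤ (t - k) * 2 :=
    mul_le_mul_of_nonpos_left (by linarith) (by linarith)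
  have hdiv : t - k - 2 ≤ (t - k - 2) / E := le_div_of_nonpos_of_one_le (by linarith) hE
  rw [reparamInv, max_eq_left (by linarith), min_eq_left (by linarith)]

theorem reparamInv_add_two (hkn : k ≤ n) : reparamInv E n k (k + 2) = n - k + 1 := by
  rw [reparamInv, max_eq_right (by linarith), min_eq_left (by simp; linarith)]
  ring

theorem reparamInv_le_of_le_add_five (hE : 0 < E) (ht : t ≤ k + 5) :
    reparamInv E n k t ≤ n - k + 1 + 3 / E :=
  (min_le_right _ _).trans (by gcongr; linarith)

theorem neg_le_reparamInv (hE : 1 ≤ E) (hk : 0 ≤ k) (hkn : k ≤ n) (ht : 0 ≤ t) :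
    -(n + 2) ≤ reparamInv E n k t := by
  have hdiv : -k - 2 ≤ (-k - 2) / E := le_div_of_nonpos_of_one_le (by linarith) hE
  have hmono : (-k - 2) / E ≤ (t - k - 2) / E := by gcongr; linarith
  exact le_min (le_max_of_le_left (by linarith)) (by linarith)

end Reparam

section Tube

/-- Folds the line at `β`: the identity to the right of the fold, and on the left of it the
reflection stretched by the factor `E`. -/
def foldLine (β E x : ℝ) : ℝ :=
  max x (E * (β - x))

/-- The arc length of the cap of strand `u` of the bent tube. -/
noncomputable def capLength (β E u : ℝ) : ℝ :=
  (u - β + u / E) / E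

/-- Tube coordinates of a point of the plane: the strand, and the arc length along the strand,
measured from the start of the cap. -/
noncomputable def unbend (β E n : ℝ) (z : ℝ × ℝ) : ℝ × ℝ :=
  let u := foldLine β E z.1 + max (z.2 - (n + 2)) 0
  let h := min (z.2 - (n + 2)) 0
  -- The last factor is at most `-1` on the right leg and at least `1` on the left leg, where it
  -- equals `16 * u - 1`; it thus determines the sign with which `h` counts.
  (u, (u - z.1) / E + max h (min (-h) ((n + 2) * (16 * E * (β - z.1) - 1))))

/-- The point of the plane with given tube coordinates. -/
noncomputable def bend (β E n : ℝ) (w : ℝ × ℝ) : ℝ × ℝ :=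
  let x := max (β - w.1 / E) (min w.1 (w.1 - E * w.2))
  (x, n + 2 + (w.1 - foldLine β E x) + min w.2 0 - max (w.2 - capLength β E w.1) 0)

/-- The bent tube: `z` lies on strand `w.1` at arc length `w.2`. Each strand runs up a right leg,
turns left along a cap above height `n + 2` and comes down a left leg, which is thinner than the
right leg by the factor `E`. -/
inductive OnTube (β E n : ℝ) (z w : ℝ × ℝ) : Prop
  | rightLeg (hx : z.1 = w.1) (ht : z.2 = n + 2 + w.2) (hS : w.2 ≤ 0)
  | cap (hx : z.1 = w.1 - E * w.2) (ht : z.2 = n + 2 + (w.1 - foldLine β E z.1)) (hS : 0 ≤ w.2)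
      (hcap : w.2 ≤ capLength β E w.1)
  | leftLeg (hx : z.1 = β - w.1 / E) (ht : z.2 = n + 2 - (w.2 - capLength β E w.1))
      (hcap : capLength β E w.1 ≤ w.2)

variable {β E n : ℝ} {z w : ℝ × ℝ}

theorem mul_capLength {u : ℝ} (hE : 0 < E) : E * capLength β E u = u - β + u / E :=
  mul_div_cancel₀ _ hE.ne'

theorem capLength_nonneg {u : ℝ} (hβ : 0 ≤ β) (hE : 0 < E) (hu : β ≤ u) :
    0 ≤ capLength β E u :=
  div_nonneg (add_nonneg (by linarith) (div_nonneg (by linarith) hE.le)) hE.le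

theorem foldLine_of_le {x : ℝ} (hβ : 0 ≤ β) (hE : 0 ≤ E) (hx : β ≤ x) : foldLine β E x = x :=
  max_eq_left (by nlinarith)

theorem foldLine_sub_div {u : ℝ} (hβ : 0 ≤ β) (hE : 0 < E) (hu : β ≤ u) :
    foldLine β E (β - u / E) = u := by
  have hdiv : 0 ≤ u / E := div_nonneg (by linarith) hE.le
  rw [foldLine, sub_sub_cancel, mul_div_cancel₀ _ hE.ne', max_eq_right (by linarith)]

theorem foldLine_le_iff {x u : ℝ} (hE : 0 < E) :
    foldLine β E x ≤ u ↔ x ≤ u ∧ β - u / E ≤ x := by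
  rw [foldLine, max_le_iff, ← le_div_iff₀' hE, sub_le_comm]

theorem OnTube.foldLine_le (h : OnTube β E n z w) (hβ : 0 ≤ β) (hE : 0 < E) (hw : β ≤ w.1) :
    foldLine β E z.1 ≤ w.1 := by
  cases h with
  | rightLeg hx ht hS => rw [hx, foldLine_of_le hβ hE.le hw]
  | leftLeg hx ht hcap => rw [hx, foldLine_sub_div hβ hE hw]
  | cap hx ht hS hcap =>
    have hmul : E * w.2 ≤ w.1 - β + w.1 / E :=
      (mul_le_mul_of_nonneg_left hcap hE.le).trans_eq (mul_capLength hE)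
    exact (foldLine_le_iff hE).2 ⟨by nlinarith, by linarith⟩

theorem OnTube.bend_eq (h : OnTube β E n z w) (hβ : 0 ≤ β) (hE : 0 < E) (hw : β ≤ w.1) :
    bend β E n w = z := by
  have hcap_nonneg := capLength_nonneg hβ hE hw
  have hdiv : 0 ≤ w.1 / E := div_nonneg (by linarith) hE.le
  have hmul_cap := mul_capLength (β := β) (u := w.1) hE
  suffices hx : max (β - w.1 / E) (min w.1 (w.1 - E * w.2)) = z.1 ∧
      n + 2 + (w.1 - foldLine β E z.1) + min w.2 0 - max (w.2 - capLength β E w.1) 0 = z.2 by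
    simp only [bend, hx.1, hx.2]
  cases h with
  | rightLeg hx ht hS =>
    rw [min_eq_left (by nlinarith), max_eq_right (by linarith), hx, foldLine_of_le hβ hE.le hw,
      min_eq_left hS, max_eq_right (by linarith)]
    exact ⟨rfl, by linarith⟩
  | cap hx ht hS hcap =>
    rw [min_eq_right (by nlinarith), max_eq_right (by nlinarith), min_eq_right hS,
      max_eq_right (by linarith)]
    exact ⟨hx.symm, by linarith⟩
  | leftLeg hx ht hcap =>
    rw [min_eq_right (by nlinarith), max_eq_left (by nlinarith), hx, foldLine_sub_div hβ hE hw,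
      min_eq_right (by linarith), max_eq_left (by linarith)]
    exact ⟨rfl, by linarith⟩

theorem exists_onTube (β E n : ℝ) (w : ℝ × ℝ) : ∃ z, OnTube β E n z w := by
  rcases le_total w.2 0 with hS | hS
  · exact ⟨(w.1, n + 2 + w.2), .rightLeg rfl rfl hS⟩
  · rcases le_total w.2 (capLength β E w.1) with hcap | hcap
    · exact ⟨(w.1 - E * w.2, n + 2 + (w.1 - foldLine β E (w.1 - E * w.2))),
        .cap rfl rfl hS hcap⟩
    · exact ⟨(β - w.1 / E, n + 2 - (w.2 - capLength β E w.1)), .leftLeg rfl rfl hcap⟩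

theorem onTube_bend (hβ : 0 ≤ β) (hE : 0 < E) (hw : β ≤ w.1) :
    OnTube β E n (bend β E n w) w := by
  obtain ⟨z, hz⟩ := exists_onTube β E n w
  rwa [hz.bend_eq hβ hE hw]

theorem OnTube.unbend_eq (h : OnTube β E n z w) (hβ : 1 / 8 ≤ β) (hE : 0 < E) (hn : 0 ≤ n)
    (hz : 0 ≤ z.2) (hw : β ≤ w.1) : unbend β E n z = w := by
  have hfold : foldLine β E z.1 ≤ w.1 := h.foldLine_le (by linarith) hE hw
  have hcap_eq : (w.1 - (β - w.1 / E)) / E = capLength β E w.1 := by rw [capLength]; ring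
  simp only [unbend]
  cases h with
  | rightLeg hx ht hS =>
    have hfactor : (n + 2) * (16 * E * (β - z.1) - 1) ≤ (n + 2) * (-1) := by
      have : E * (β - z.1) ≤ 0 := mul_nonpos_of_nonneg_of_nonpos hE.le (by linarith)
      gcongr
      linarith
    rw [max_eq_right (by linarith : z.2 - (n + 2) ≤ 0), min_eq_left (by linarith : _ ≤ (0 : ℝ)),
      min_eq_right (by linarith), max_eq_left (by linarith), hx,
      foldLine_of_le (by linarith) hE.le hw, ht]
    ext <;> simp
  | cap hx ht hS hcap =>
    rw [max_eq_left (by linarith), min_eq_right (by linarith), max_eq_left (by simp)]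
    ext
    · linarith
    · rw [ht, hx]
      field_simp
      ring
  | leftLeg hx ht hcap =>
    have hfactor : (n + 2) * 1 ≤ (n + 2) * (16 * E * (β - z.1) - 1) := by
      have : E * (β - z.1) = w.1 := by rw [hx, sub_sub_cancel, mul_div_cancel₀ _ hE.ne']
      gcongr
      linarith
    rw [max_eq_right (by linarith : z.2 - (n + 2) ≤ 0), min_eq_left (by linarith : _ ≤ (0 : ℝ)),
      min_eq_left (by linarith), max_eq_right (by linarith), hx,
      foldLine_sub_div (by linarith) hE hw, add_zero, hcap_eq, ht]
    ext <;> simp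

theorem exists_onTube_of_le_unbend (hE : 0 < E) (hz : β ≤ (unbend β E n z).1) :
    ∃ w : ℝ × ℝ, β ≤ w.1 ∧ OnTube β E n z w := by
  set u := (unbend β E n z).1 with hu
  simp only [unbend] at hu
  rcases le_total z.2 (n + 2) with ht | ht
  · rw [max_eq_right (by linarith), add_zero] at hu
    rcases le_total (E * (β - z.1)) z.1 with hx | hx
    · have hux : u = z.1 := by rw [hu, foldLine, max_eq_left hx]
      exact ⟨(u, z.2 - (n + 2)), hz, .rightLeg hux.symm (by simp) (by simpa using ht)⟩
    · have hux : u = E * (β - z.1) := by rw [hu, foldLine, max_eq_right hx]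
      refine ⟨(u, capLength β E u + (n + 2 - z.2)), hz, .leftLeg ?_ (by simp) (by simpa using ht)⟩
      rw [hux, mul_div_cancel_left₀ _ hE.ne', sub_sub_cancel]
  · rw [max_eq_left (by linarith)] at hu
    obtain ⟨hxu, hux⟩ := (foldLine_le_iff (β := β) (x := z.1) (u := u) hE).1 (by linarith)
    refine ⟨(u, (u - z.1) / E), hz, .cap ?_ (by linarith) ?_ ?_⟩
    · simp [mul_div_cancel₀ _ hE.ne']
    · exact div_nonneg (by linarith) hE.le
    · exact div_le_div_of_nonneg_right (by linarith) hE.le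

theorem onTube_unbend (hβ : 1 / 8 ≤ β) (hE : 0 < E) (hn : 0 ≤ n) (hz : 0 ≤ z.2)
    (hu : β ≤ (unbend β E n z).1) : OnTube β E n z (unbend β E n z) := by
  obtain ⟨w, hw, hzw⟩ := exists_onTube_of_le_unbend hE hu
  rwa [hzw.unbend_eq hβ hE hn hz hw]

theorem foldLine_nonneg (hβ : 0 ≤ β) (hE : 0 ≤ E) (x : ℝ) : 0 ≤ foldLine β E x := by
  rcases le_total 0 x with hx | hx
  · exact le_max_of_le_left hx
  · exact le_max_of_le_right (mul_nonneg hE (by linarith))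

theorem OnTube.snd_nonneg (h : OnTube β E n z w) (hβ : 0 ≤ β) (hE : 0 < E) (hn : 0 ≤ n)
    (hw : β ≤ w.1) (hS : |w.2| ≤ n + 2) : 0 ≤ z.2 := by
  have hfold := h.foldLine_le hβ hE hw
  have hcap_nonneg := capLength_nonneg hβ hE hw
  obtain ⟨hS_ge, hS_le⟩ := abs_le.1 hS
  cases h <;> linarith

theorem OnTube.snd_le (h : OnTube β E n z w) (hβ : 0 ≤ β) (hE : 0 ≤ E) (hw : β ≤ w.1) :
    z.2 ≤ n + 2 + w.1 := by
  have hfold := foldLine_nonneg hβ hE z.1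
  cases h <;> linarith

end Tube

section Stage

/-- The stage map: it straightens the bent tube and then reparametrises the strands. -/
noncomputable def stageMap (β E n k : ℝ) (z : ℝ × ℝ) : ℝ × ℝ :=
  ((unbend β E n z).1, reparam E n k (unbend β E n z).2)

/-- The inverse of `stageMap` on the straightened tube. -/
noncomputable def stageInv (β E n k : ℝ) (w : ℝ × ℝ) : ℝ × ℝ :=
  bend β E n (w.1, reparamInv E n k w.2)

/-- The range of parameters in which a stage map is used: the tube of length `n` is folded at `β`
with ratio `E`, and the stage fixes the points to the right of `β` below height `k`. -/
structure StageParams (β E n k : ℝ) : Prop where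
  le_fold : 1 / 8 ≤ β
  le_ratio : 16 ≤ E
  nonneg : 0 ≤ k
  le : k ≤ n

namespace StageParams

variable {β E n k : ℝ} {z w : ℝ × ℝ}

theorem ratio_pos (P : StageParams β E n k) : 0 < E := by linarith [P.le_ratio]

theorem one_le_ratio (P : StageParams β E n k) : 1 ≤ E := by linarith [P.le_ratio]

theorem three_div_ratio_le (P : StageParams β E n k) : 3 / E ≤ 1 / 2 := by
  rw [div_le_iff₀ P.ratio_pos]
  linarith [P.le_ratio]

theorem le_reparam (P : StageParams β E n k) {S : ℝ} (hS : k - (n + 2) ≤ S) :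
    k ≤ reparam E n k S := by
  rwa [le_reparam_iff P.ratio_pos P.le,
    reparamInv_of_le P.one_le_ratio P.le le_rfl]

theorem add_two_le_reparam_iff (P : StageParams β E n k) {S : ℝ} :
    k + 2 ≤ reparam E n k S ↔ n - k + 1 ≤ S := by
  rw [le_reparam_iff P.ratio_pos P.le, reparamInv_add_two P.le]

theorem le_of_reparam_le (P : StageParams β E n k) {S : ℝ} (hS : reparam E n k S ≤ k + 5) :
    S ≤ n - k + 1 + 3 / E := by
  have h := reparamInv_le_of_le_add_five (n := n) P.ratio_pos hS
  rwa [reparamInv_reparam P.ratio_pos P.le] at h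

theorem stageInv_stageMap (P : StageParams β E n k) (hz : 0 ≤ z.2)
    (hu : β ≤ (stageMap β E n k z).1) : stageInv β E n k (stageMap β E n k z) = z := by
  have hβ := P.le_fold
  have htube := onTube_unbend hβ P.ratio_pos (P.nonneg.trans P.le) hz hu
  simp only [stageInv, stageMap, reparamInv_reparam P.ratio_pos P.le]
  exact htube.bend_eq (by linarith) P.ratio_pos hu

theorem onTube_stageInv (P : StageParams β E n k) (hw : β ≤ w.1) :
    OnTube β E n (stageInv β E n k w) (w.1, reparamInv E n k w.2) :=
  onTube_bend (by linarith [P.le_fold]) P.ratio_pos hw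

theorem abs_reparamInv_le (P : StageParams β E n k) {t : ℝ} (ht : 0 ≤ t) (ht' : t ≤ k + 5) :
    |reparamInv E n k t| ≤ n + 2 := by
  have hge := neg_le_reparamInv P.one_le_ratio P.nonneg P.le ht
  have hle := reparamInv_le_of_le_add_five (n := n) P.ratio_pos ht'
  exact abs_le.2 ⟨hge, by linarith [P.three_div_ratio_le, P.nonneg]⟩

theorem stageInv_snd_nonneg (P : StageParams β E n k) (hw : β ≤ w.1) (ht : 0 ≤ w.2)
    (ht' : w.2 ≤ k + 5) : 0 ≤ (stageInv β E n k w).2 :=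
  (P.onTube_stageInv hw).snd_nonneg (by linarith [P.le_fold]) P.ratio_pos (P.nonneg.trans P.le) hw
    (P.abs_reparamInv_le ht ht')

theorem stageInv_snd_le (P : StageParams β E n k) (hw : β ≤ w.1) :
    (stageInv β E n k w).2 ≤ n + 2 + w.1 :=
  (P.onTube_stageInv hw).snd_le (by linarith [P.le_fold]) P.ratio_pos.le hw

theorem stageInv_fst_mem (P : StageParams β E n k) (hw : β ≤ w.1) :
    (stageInv β E n k w).1 ∈ Set.Icc (β - w.1 / E) w.1 :=
  ((foldLine_le_iff P.ratio_pos).1 ((P.onTube_stageInv hw).foldLine_le (by linarith [P.le_fold])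
    P.ratio_pos hw)).symm

theorem stageMap_stageInv (P : StageParams β E n k) (hw : β ≤ w.1) (ht : 0 ≤ w.2)
    (ht' : w.2 ≤ k + 5) : stageMap β E n k (stageInv β E n k w) = w := by
  rw [stageMap, (P.onTube_stageInv hw).unbend_eq P.le_fold P.ratio_pos (P.nonneg.trans P.le)
    (P.stageInv_snd_nonneg hw ht ht') hw, reparam_reparamInv P.ratio_pos P.le]

theorem stageInv_cases (P : StageParams β E n k) (hw : β ≤ w.1) :
    (w.2 < k + 2 ∧ (stageInv β E n k w).1 = w.1) ∨ n ≤ (stageInv β E n k w).2 ∨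
      (stageInv β E n k w).1 ≤ β := by
  have htube := P.onTube_stageInv hw
  have hfold := htube.foldLine_le (by linarith [P.le_fold]) P.ratio_pos hw
  cases htube with
  | rightLeg hx ht hS =>
    refine .inl ⟨?_, hx⟩
    by_contra! hlt
    rw [← reparam_reparamInv (t := w.2) P.ratio_pos P.le, P.add_two_le_reparam_iff] at hlt
    linarith [P.le]
  | cap hx ht hS hcap => exact .inr (.inl (by linarith))
  | leftLeg hx ht hcap =>
    have hdiv : 0 ≤ w.1 / E := div_nonneg (by linarith [P.le_fold]) P.ratio_pos.le
    exact .inr (.inr (by linarith))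

theorem stageMap_eq_self (P : StageParams β E n k) (hx : β ≤ z.1) (ht : 0 ≤ z.2) (ht' : z.2 ≤ k) :
    stageMap β E n k z = z := by
  have htube : OnTube β E n z (z.1, z.2 - (n + 2)) :=
    .rightLeg rfl (by simp) (by linarith [P.le])
  rw [stageMap, htube.unbend_eq P.le_fold P.ratio_pos (P.nonneg.trans P.le) ht hx,
    ← reparamInv_of_le P.one_le_ratio P.le ht', reparam_reparamInv P.ratio_pos P.le]

theorem stageMap_eq_self_or_le (P : StageParams β E n k) (hz : 0 ≤ z.2)
    (hu : β ≤ (stageMap β E n k z).1) (ht : (stageMap β E n k z).2 ≤ k + 5) :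
    z.2 < k ∧ stageMap β E n k z = z ∨ k ≤ z.2 ∧ k ≤ (stageMap β E n k z).2 := by
  have hβ := P.le_fold
  have htube := onTube_unbend hβ P.ratio_pos (P.nonneg.trans P.le) hz hu
  have hfold := htube.foldLine_le (by linarith) P.ratio_pos hu
  have hcap_nonneg : 0 ≤ capLength β E (unbend β E n z).1 :=
    capLength_nonneg (by linarith) P.ratio_pos hu
  have hS_le := P.le_of_reparam_le ht
  have hkn := P.le
  have hE := P.three_div_ratio_le
  rcases lt_or_ge z.2 k with hlt | hge
  · refine .inl ⟨hlt, P.stageMap_eq_self ?_ hz hlt.le⟩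
    cases htube with
    | rightLeg hx ht hS => exact hx ▸ hu
    | cap hx ht hS hcap => linarith
    | leftLeg hx ht hcap => linarith
  · refine .inr ⟨hge, P.le_reparam ?_⟩
    cases htube <;> linarith

theorem mem_box_of_add_two_le (P : StageParams β E n k) (hz : 0 ≤ z.2)
    (hu : β ≤ (stageMap β E n k z).1) (hu' : (stageMap β E n k z).1 ≤ 1)
    (ht : k + 2 ≤ (stageMap β E n k z).2) (ht' : (stageMap β E n k z).2 ≤ k + 5) :
    β - 1 / E ≤ z.1 ∧ z.1 ≤ β ∧ |z.2 - (k + 1)| ≤ 3 / E := by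
  have hβ := P.le_fold
  have hE := P.ratio_pos
  have hkn := P.le
  have htube := onTube_unbend hβ hE (P.nonneg.trans P.le) hz hu
  have hS_le := P.le_of_reparam_le ht'
  have hS_ge := P.add_two_le_reparam_iff.1 ht
  have hu_div : (stageMap β E n k z).1 / E ≤ 1 / E := by gcongr
  have hu_div_nonneg : 0 ≤ (stageMap β E n k z).1 / E := div_nonneg (by linarith) hE.le
  have h3E := P.three_div_ratio_le
  have h31 : 3 / E = 3 * (1 / E) := by ring
  have hcap_nonneg := capLength_nonneg (by linarith) hE hu
  have hcap_le : capLength β E (stageMap β E n k z).1 ≤ 2 / E := by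
    unfold capLength
    gcongr
    linarith
  have h21 : 2 / E = 2 * (1 / E) := by ring
  simp only [stageMap] at *
  cases htube with
  | rightLeg hx ht hS => linarith
  | cap hx ht hS hcap => linarith
  | leftLeg hx ht hcap => exact ⟨by linarith, by linarith, abs_le.2 ⟨by linarith, by linarith⟩⟩

end StageParams

section ComputablyLipschitz

variable {α : Type*} [Primcodable α] {b : α → ℚ} {E n k : α → ℕ} {g : α → ℝ × ℝ → ℝ}

theorem ComputablyLipschitz.reparam (hE : Computable E) (hn : Computable n) (hk : Computable k)
    (hkn : ∀ a, k a ≤ n a) (hg : ComputablyLipschitz g) :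
    ComputablyLipschitz fun a z => reparam (E a) (n a) (k a) (g a z) := by
  have hgap : Computable fun a => n a - k a := Primrec.nat_sub.to_comp.comp hn hk
  have hlen : Computable fun a => 2 * (n a - k a) + 3 :=
    (Primrec.nat_add.comp (Primrec.nat_mul.comp (.const 2) .id) (.const 3)).to_comp.comp hgap
  refine ((((natCast hn).add (ofNat 2)).add hg).min ((natCast hk).add (((hg.add
    ((natCast hgap).add (ofNat 2))).ofNat_mul 2).div_natCast hlen))).max
    (((natCast hk).add (ofNat 2)).add ((hg.sub ((natCast hgap).add one)).natCast_mul hE))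
    |>.of_eq fun a z => ?_
  simp only [CantorFan.reparam, Nat.cast_add, Nat.cast_mul, Nat.cast_sub (hkn a), Nat.cast_ofNat]
  ring_nf

theorem ComputablyLipschitz.reparamInv (hE : Computable E) (hn : Computable n) (hk : Computable k)
    (hkn : ∀ a, k a ≤ n a) (hg : ComputablyLipschitz g) :
    ComputablyLipschitz fun a z => reparamInv (E a) (n a) (k a) (g a z) := by
  have hgap : Computable fun a => n a - k a := Primrec.nat_sub.to_comp.comp hn hk
  have hlen : Computable fun a => 2 * (n a - k a) + 3 :=
    (Primrec.nat_add.comp (Primrec.nat_mul.comp (.const 2) .id) (.const 3)).to_comp.comp hgap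
  refine ((hg.sub ((natCast hn).add (ofNat 2))).max (((natCast hk).sub ((natCast hn).add
    (ofNat 2))).add (((hg.sub (natCast hk)).natCast_mul hlen).div_ofNat 2))).min
    (((natCast hgap).add one).add (((hg.sub (natCast hk)).sub (ofNat 2)).div_natCast hE))
    |>.of_eq fun a z => ?_
  simp only [CantorFan.reparamInv, Nat.cast_add, Nat.cast_mul, Nat.cast_sub (hkn a),
    Nat.cast_ofNat]
  ring_nf

theorem ComputablyLipschitz.foldLine (hb : Computable b) (hE : Computable E)
    (hg : ComputablyLipschitz g) :
    ComputablyLipschitz fun a z => foldLine (b a) (E a) (g a z) :=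
  hg.max (((ratCast hb).sub hg).natCast_mul hE)

theorem computablyLipschitzMap_unbend (hb : Computable b) (hE : Computable E)
    (hn : Computable n) : ComputablyLipschitzMap fun a => unbend (b a) (E a) (n a) := by
  have hx := ComputablyLipschitz.fst (α := α)
  have hn2 : Computable fun a => n a + 2 := Primrec.nat_add.to_comp.comp hn (.const 2)
  have hheight := ComputablyLipschitz.snd.sub ((ComputablyLipschitz.natCast hn).add (.ofNat 2))
  have hstrand := (hx.foldLine hb hE).add (hheight.max .zero)
  have hfactor := (((((ComputablyLipschitz.ratCast hb).sub hx).natCast_mul hE).ofNat_mul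
    16).sub .one).natCast_mul hn2
  refine ⟨hstrand, ((hstrand.sub hx).div_natCast hE).add ((hheight.min .zero).max
    ((hheight.min .zero).neg.min hfactor)) |>.of_eq fun a z => ?_⟩
  simp only [unbend, mul_assoc, Nat.cast_add, Nat.cast_ofNat]

theorem computablyLipschitzMap_bend (hb : Computable b) (hE : Computable E)
    (hn : Computable n) : ComputablyLipschitzMap fun a => bend (b a) (E a) (n a) := by
  have hu := ComputablyLipschitz.fst (α := α)
  have hS := ComputablyLipschitz.snd (α := α)
  have hβ := ComputablyLipschitz.ratCast hb
  have hx := (hβ.sub (hu.div_natCast hE)).max (hu.min (hu.sub (hS.natCast_mul hE)))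
  have hcap := ((hu.sub hβ).add (hu.div_natCast hE)).div_natCast hE
  exact ⟨hx, (((((ComputablyLipschitz.natCast hn).add (.ofNat 2)).add
    (hu.sub (hx.foldLine hb hE))).add (hS.min .zero)).sub ((hS.sub hcap).max .zero))⟩

theorem computablyLipschitzMap_stageMap (hb : Computable b) (hE : Computable E)
    (hn : Computable n) (hk : Computable k) (hkn : ∀ a, k a ≤ n a) :
    ComputablyLipschitzMap fun a => stageMap (b a) (E a) (n a) (k a) :=
  have hunbend := computablyLipschitzMap_unbend hb hE hn
  ⟨hunbend.1, hunbend.2.reparam hE hn hk hkn⟩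

theorem computablyLipschitzMap_stageInv (hb : Computable b) (hE : Computable E)
    (hn : Computable n) (hk : Computable k) (hkn : ∀ a, k a ≤ n a) :
    ComputablyLipschitzMap fun a => stageInv (b a) (E a) (n a) (k a) :=
  (computablyLipschitzMap_bend hb hE hn).comp
    (G := fun a w => (w.1, reparamInv (E a) (n a) (k a) w.2))
    ⟨.fst, ComputablyLipschitz.snd.reparamInv hE hn hk hkn⟩

end ComputablyLipschitz

end Stage

/-! ### A Cantor set without computable points -/

section Letters

/-- The base `4` digit that encodes a letter: the Cantor set is built from the digits `1` and
`3`. -/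
def letterDigit (b : Bool) : Fin 4 := cond b 3 1

/-- The numbers whose first base `4` digit encodes the letter `b`. -/
noncomputable def letterInterval (b : Bool) : Set ℝ :=
  Icc ((letterDigit b : ℕ) / 4) (((letterDigit b : ℕ) + 1) / 4)

/-- Deletes the first base `4` digit of a number in a letter interval; it is extended continuously
to the line. -/
noncomputable def expand (x : ℝ) : ℝ :=
  max (min (4 * x - 1) (3 - 4 * x)) (4 * x - 3)

/-- The sequence of letters that encodes a number; `5 / 8` lies in the middle between the two
letter intervals. -/
noncomputable def itinerary (x : ℝ) (i : ℕ) : Bool :=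
  decide (5 / 8 < expand^[i] x)

/-- The number encoded by a sequence of letters. -/
noncomputable def ofItinerary (a : ℕ → Bool) : ℝ :=
  Real.ofDigits fun i => letterDigit (a i)

variable {b : Bool} {x : ℝ} {a : ℕ → Bool}

theorem letterInterval_subset_Icc : letterInterval b ⊆ Icc (1 / 4) 1 := by
  rintro x ⟨hge, hle⟩
  cases b <;> norm_num [letterDigit] at hge hle <;> constructor <;> linarith

theorem expand_of_mem (hx : x ∈ letterInterval b) : expand x = 4 * x - (letterDigit b : ℕ) := by
  obtain ⟨hge, hle⟩ := hx
  cases b <;> norm_num [letterDigit] at hge hle ⊢ <;> rw [expand]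
  · rw [min_eq_left (by linarith), max_eq_left (by linarith)]
  · rw [min_eq_right (by linarith), max_eq_right (by linarith)]

theorem lt_iff_of_mem (hx : x ∈ letterInterval b) : 5 / 8 < x ↔ b = true := by
  obtain ⟨hge, hle⟩ := hx
  cases b <;> norm_num [letterDigit] at hge hle ⊢ <;> linarith

theorem itinerary_of_mem {i : ℕ} (hx : expand^[i] x ∈ letterInterval b) : itinerary x i = b := by
  simp only [itinerary, lt_iff_of_mem hx, Bool.decide_eq_true]

theorem continuous_expand : Continuous expand := by
  unfold expand
  fun_prop

theorem ofItinerary_eq (a : ℕ → Bool) :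
    ofItinerary a = ((letterDigit (a 0) : ℕ) + ofItinerary fun i => a (i + 1)) / 4 := by
  rw [ofItinerary, Real.ofDigits_eq_sum_add_ofDigits _ 1]
  simp only [Finset.range_one, Finset.sum_singleton, Real.ofDigitsTerm, ofItinerary]
  norm_num
  ring

theorem ofItinerary_mem (a : ℕ → Bool) : ofItinerary a ∈ letterInterval (a 0) := by
  have hge := Real.ofDigits_nonneg fun i => letterDigit (a (i + 1))
  have hle := Real.ofDigits_le_one fun i => letterDigit (a (i + 1))
  rw [ofItinerary_eq, ofItinerary]
  exact ⟨by linarith, by linarith⟩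

theorem expand_iterate_ofItinerary (i : ℕ) (a : ℕ → Bool) :
    expand^[i] (ofItinerary a) = ofItinerary fun j => a (j + i) := by
  induction i generalizing a with
  | zero => rfl
  | succ i ih =>
    have hshift : expand (ofItinerary a) = ofItinerary fun j => a (j + 1) := by
      rw [expand_of_mem (ofItinerary_mem a)]
      linarith [ofItinerary_eq a]
    rw [Function.iterate_succ_apply, hshift, ih]
    simp only [add_assoc]

theorem expand_iterate_ofItinerary_mem (i : ℕ) (a : ℕ → Bool) :
    expand^[i] (ofItinerary a) ∈ letterInterval (a i) := by
  simpa only [expand_iterate_ofItinerary, zero_add] using ofItinerary_mem fun j => a (j + i)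

theorem itinerary_ofItinerary (a : ℕ → Bool) : itinerary (ofItinerary a) = a :=
  funext fun i => itinerary_of_mem (expand_iterate_ofItinerary_mem i a)

theorem expand_iterate_sub {y : ℝ} (hx : ∀ i, expand^[i] x ∈ letterInterval (a i))
    (hy : ∀ i, expand^[i] y ∈ letterInterval (a i)) (i : ℕ) :
    expand^[i] x - expand^[i] y = 4 ^ i * (x - y) := by
  induction i with
  | zero => simp
  | succ i ih =>
    rw [Function.iterate_succ_apply', Function.iterate_succ_apply', expand_of_mem (hx i),
      expand_of_mem (hy i), pow_succ']
    linear_combination 4 * ih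

theorem eq_ofItinerary (hx : ∀ i, expand^[i] x ∈ letterInterval (a i)) : x = ofItinerary a := by
  have hy := fun i => expand_iterate_ofItinerary_mem i a
  have hbound (i : ℕ) : |x - ofItinerary a| ≤ (1 / 4 : ℝ) ^ i := by
    have hdist : |4 ^ i * (x - ofItinerary a)| ≤ 1 := by
      rw [← expand_iterate_sub hx hy]
      have hx1 := letterInterval_subset_Icc (hx i)
      have hy1 := letterInterval_subset_Icc (hy i)
      exact abs_le.2 ⟨by linarith [hx1.1, hy1.2], by linarith [hx1.2, hy1.1]⟩
    rw [abs_mul, abs_of_pos (by positivity)] at hdist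
    rw [one_div, inv_pow, ← one_div, le_div_iff₀' (by positivity)]
    exact hdist
  have hzero : |x - ofItinerary a| ≤ 0 :=
    ge_of_tendsto' (tendsto_pow_atTop_nhds_zero_of_lt_one (by norm_num) (by norm_num)) hbound
  exact sub_eq_zero.1 (abs_nonpos_iff.1 hzero)

end Letters

section Forced

/-- At stage `s` it is known that the itineraries of the points of the Cantor set have the letter
`b` at position `i`. The even positions carry a separator of the two recursively inseparable sets
`{e | diagonalEval s e = some 0 for some s}` and `{e | diagonalEval s e = some 1 for some s}`, and
the odd positions are free. -/
def Forced (b : Bool) (s i : ℕ) : Prop :=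
  Even i ∧ diagonalEval s (i / 2) = some (cond b 0 1)

instance (b : Bool) (s i : ℕ) : Decidable (Forced b s i) :=
  inferInstanceAs (Decidable (_ ∧ _))

/-- The numbers whose first `s` letters exist and respect what is forced at stage `s`. -/
noncomputable def cantorStage (s : ℕ) : Set ℝ :=
  {x | ∀ i < s, ∃ b, ¬ Forced (!b) s i ∧ expand^[i] x ∈ letterInterval b}

/-- A Cantor set all of whose points encode separators of recursively inseparable sets. -/
noncomputable def inseparableCantorSet : Set ℝ :=
  ⋂ s, cantorStage s

variable {b : Bool} {s s' i : ℕ} {x : ℝ}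

theorem Forced.mono (h : Forced b s i) (hs : s ≤ s') : Forced b s' i :=
  ⟨h.1, diagonalEval_mono hs h.2⟩

theorem Forced.eq {b' : Bool} (h : Forced b s i) (h' : Forced b' s' i) : b = b' := by
  have := diagonalEval_inj h.2 h'.2
  cases b <;> cases b' <;> simp_all

theorem Forced.exists_true_iff (h : Forced b s i) : (∃ s', Forced true s' i) ↔ b = true :=
  ⟨fun ⟨_, h'⟩ => h.eq h', fun hb => ⟨s, hb ▸ h⟩⟩

theorem computablePred_forced (b : Bool) :
    ComputablePred fun x : ℕ × ℕ => Forced b x.1 x.2 := by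
  have hhalf : Computable fun x : ℕ × ℕ => x.2 / 2 :=
    Primrec.nat_div.to_comp.comp Computable.snd (Computable.const 2)
  have hmod : Computable fun x : ℕ × ℕ => x.2 % 2 :=
    Primrec.nat_mod.to_comp.comp Computable.snd (Computable.const 2)
  exact (computablePred_and (computablePred_eq hmod (Computable.const 0))
    (computablePred_eq (computable_diagonalEval.comp Computable.fst hhalf)
      (Computable.const (some (cond b 0 1))))).of_eq fun x => by rw [Forced, Nat.even_iff]

theorem cantorStage_anti (hs : s ≤ s') : cantorStage s' ⊆ cantorStage s := fun _ hx i hi => by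
  obtain ⟨b, hforced, hmem⟩ := hx i (hi.trans_le hs)
  exact ⟨b, fun h => hforced (h.mono hs), hmem⟩

theorem mem_inseparableCantorSet_iff : x ∈ inseparableCantorSet ↔
    ∀ i, expand^[i] x ∈ letterInterval (itinerary x i) ∧ ∀ s, ¬ Forced (!itinerary x i) s i := by
  simp only [inseparableCantorSet, mem_iInter, cantorStage, mem_ofPred_eq]
  constructor
  · intro hx i
    obtain ⟨b, -, hmem⟩ := hx (i + 1) i i.lt_succ_self
    rw [itinerary_of_mem hmem]
    refine ⟨hmem, fun s hs => ?_⟩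
    obtain ⟨b', hforced, hmem'⟩ := hx (max s (i + 1)) i (i.lt_succ_self.trans_le (le_max_right _ _))
    rw [← itinerary_of_mem hmem', itinerary_of_mem hmem] at hforced
    exact hforced (hs.mono (le_max_left _ _))
  · exact fun hx s i _ => ⟨_, (hx i).2 s, (hx i).1⟩

theorem itinerary_eq_of_forced (hx : x ∈ inseparableCantorSet) (h : Forced b s i) :
    itinerary x i = b := by
  by_contra hne
  exact (mem_inseparableCantorSet_iff.1 hx i).2 s (by rwa [Bool.not_eq.2 hne])

end Forced

section FoldPoint

/-- The number with the base `4` expansion of length `m` that is least among those compatible with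
what is forced at stage `s`. -/
def leastPrefix (s : ℕ) : ℕ → ℚ
  | 0 => 0
  | m + 1 => leastPrefix s m + (letterDigit (decide (Forced true s m)) : ℕ) / 4 ^ (m + 1)

/-- The fold of stage `s`: the interval of length `1 / (8 * 4 ^ s)` on its left belongs to
`cantorStage s`, but lies to the left of all later stages. -/
def foldPoint (s : ℕ) : ℚ :=
  leastPrefix s s + 1 / (8 * 4 ^ s)

variable {s s' m : ℕ} {x : ℝ}

theorem computable_foldPoint : Computable foldPoint := by
  have hpow : Computable fun m => ((4 ^ m : ℕ) : ℚ)⁻¹ :=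
    computable_rat_inv_natCast.comp (computable_pow 4)
  have hdigit : Computable₂ fun s m => ((letterDigit (decide (Forced true s m)) : ℕ) : ℚ) :=
    (computable_ite (computablePred_forced true) (Computable.const 3)
      (Computable.const 1)).of_eq fun x => by
        by_cases h : Forced true x.1 x.2 <;> simp [h, letterDigit]
  have hterm : Computable₂ fun s m =>
      ((letterDigit (decide (Forced true s m)) : ℕ) : ℚ) * ((4 ^ (m + 1) : ℕ) : ℚ)⁻¹ :=
    computable_rat_mul.comp hdigit (hpow.comp (Computable.succ.comp Computable.snd))
  have hprefix : Computable₂ leastPrefix := by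
    refine computable₂_of_recurrence (h := fun s x => x.2 +
        ((letterDigit (decide (Forced true s x.1)) : ℕ) : ℚ) * ((4 ^ (x.1 + 1) : ℕ) : ℚ)⁻¹)
      (Computable.const 0) ?_ fun s m => ?_
    · exact computable_rat_add.comp (Computable.snd.comp Computable.snd)
        (hterm.comp Computable.fst (Computable.fst.comp Computable.snd))
    · rw [leastPrefix, div_eq_mul_inv, Nat.cast_pow, Nat.cast_ofNat]
  refine (computable_rat_add.comp (hprefix.comp Computable.id Computable.id)
    (computable_rat_mul.comp (Computable.const (1 / 8)) hpow)).of_eq fun s => ?_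
  simp only [foldPoint, id_eq, Nat.cast_pow, Nat.cast_ofNat, one_div, mul_inv]

theorem leastPrefix_succ_cast (s m : ℕ) : (leastPrefix s (m + 1) : ℝ) =
    leastPrefix s m + (letterDigit (decide (Forced true s m)) : ℕ) / 4 ^ (m + 1) := by
  push_cast [leastPrefix]
  rfl

theorem one_le_letterDigit (b : Bool) : (1 : ℝ) ≤ (letterDigit b : ℕ) := by
  cases b <;> norm_num [letterDigit]

theorem letterDigit_le_three (b : Bool) : ((letterDigit b : ℕ) : ℝ) ≤ 3 := by
  cases b <;> norm_num [letterDigit]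

theorem monotone_leastPrefix (s : ℕ) : Monotone fun m => (leastPrefix s m : ℝ) :=
  monotone_nat_of_le_succ fun m => by
    rw [leastPrefix_succ_cast]
    exact le_add_of_nonneg_right (by positivity)

theorem antitone_leastPrefix_add (s : ℕ) :
    Antitone fun m => (leastPrefix s m + 1 / 4 ^ m : ℝ) :=
  antitone_nat_of_succ_le fun m => by
    calc (leastPrefix s (m + 1) + 1 / 4 ^ (m + 1) : ℝ)
        = leastPrefix s m +
            ((letterDigit (decide (Forced true s m)) : ℕ) + 1) / 4 * (1 / 4 ^ m) := by
          rw [leastPrefix_succ_cast, pow_succ]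
          ring
      _ ≤ leastPrefix s m + 1 * (1 / 4 ^ m) := by
          gcongr
          linarith [letterDigit_le_three (decide (Forced true s m))]
      _ = leastPrefix s m + 1 / 4 ^ m := by rw [one_mul]

theorem foldPoint_cast (s : ℕ) :
    (foldPoint s : ℝ) = leastPrefix s s + 1 / 8 * (1 / 4 ^ s) := by
  push_cast [foldPoint]
  ring

theorem one_div_eight_le_foldPoint (s : ℕ) : 1 / 8 ≤ (foldPoint s : ℝ) := by
  rw [foldPoint_cast]
  rcases s.eq_zero_or_pos with rfl | hs
  · norm_num [leastPrefix]
  · have hle := monotone_leastPrefix s hs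
    have hdigit := one_le_letterDigit (decide (Forced true s 0))
    have hpow : (0 : ℝ) < 1 / 4 ^ s := by positivity
    simp only [Nat.succ_eq_add_one, leastPrefix_succ_cast] at hle
    simp only [leastPrefix, Rat.cast_zero, zero_add, pow_one] at hle
    linarith

theorem leastPrefix_add_expand_le (hs : s ≤ s') (hx : x ∈ cantorStage s') (hm : m ≤ s) :
    leastPrefix s m + expand^[m] x / 4 ^ m ≤ x := by
  induction m with
  | zero => simp [leastPrefix]
  | succ m ih =>
    obtain ⟨b, hforced, hmem⟩ := hx m (hm.trans hs)
    have hdigit : ((letterDigit (decide (Forced true s m)) : ℕ) : ℝ) ≤ (letterDigit b : ℕ) := by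
      cases b
      · rw [decide_eq_false fun h => hforced (h.mono hs)]
      · exact letterDigit_le_three _
    rw [Function.iterate_succ_apply', expand_of_mem hmem, leastPrefix_succ_cast]
    calc _ ≤ leastPrefix s m + (letterDigit b : ℕ) / 4 ^ (m + 1) +
          (4 * expand^[m] x - (letterDigit b : ℕ)) / 4 ^ (m + 1) := by gcongr
      _ = leastPrefix s m + expand^[m] x / 4 ^ m := by rw [pow_succ]; ring
      _ ≤ x := ih (by omega)

theorem foldPoint_le_of_mem (hs : s < s') (hx : x ∈ cantorStage s') : foldPoint s ≤ x := by
  obtain ⟨b, -, hmem⟩ := hx s hs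
  calc (foldPoint s : ℝ) = leastPrefix s s + 1 / 8 / 4 ^ s := by rw [foldPoint_cast]; ring
    _ ≤ leastPrefix s s + expand^[s] x / 4 ^ s := by
        gcongr
        linarith [(letterInterval_subset_Icc hmem).1]
    _ ≤ x := leastPrefix_add_expand_le hs.le hx le_rfl

theorem mul_sub_leastPrefix_mem (hx : leastPrefix s s ≤ x) (hx' : x ≤ leastPrefix s s + 1 / 4 ^ s)
    (hm : m < s) :
    4 ^ m * (x - leastPrefix s m) ∈ letterInterval (decide (Forced true s m)) := by
  have hge := (monotone_leastPrefix s hm).trans hx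
  have hle := hx'.trans (antitone_leastPrefix_add s hm)
  simp only [Nat.succ_eq_add_one, leastPrefix_succ_cast, pow_succ, add_assoc, ← add_div] at hge hle
  rw [← le_sub_iff_add_le', div_le_iff₀ (by positivity)] at hge
  rw [← sub_le_iff_le_add', le_div_iff₀ (by positivity)] at hle
  exact ⟨by linarith, by linarith⟩

theorem expand_iterate_eq (hx : leastPrefix s s ≤ x) (hx' : x ≤ leastPrefix s s + 1 / 4 ^ s)
    (hm : m ≤ s) : expand^[m] x = 4 ^ m * (x - leastPrefix s m) := by
  induction m with
  | zero => simp [leastPrefix]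
  | succ m ih =>
    rw [Function.iterate_succ_apply', ih (by omega),
      expand_of_mem (mul_sub_leastPrefix_mem hx hx' hm), leastPrefix_succ_cast, pow_succ]
    field_simp
    ring

theorem mem_cantorStage_of_le_foldPoint (hx : foldPoint s - 1 / (8 * 4 ^ s) ≤ x)
    (hx' : x ≤ foldPoint s) : x ∈ cantorStage s := by
  have hpow : (0 : ℝ) < 1 / 4 ^ s := by positivity
  have heighth : (1 / (8 * 4 ^ s) : ℝ) = 1 / 8 * (1 / 4 ^ s) := by ring
  rw [foldPoint_cast] at hx hx'
  have hge : leastPrefix s s ≤ x := by linarith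
  have hle : x ≤ leastPrefix s s + 1 / 4 ^ s := by linarith
  intro m hm
  refine ⟨decide (Forced true s m), fun h => ?_, ?_⟩
  · by_cases hforced : Forced true s m
    · have := h.eq hforced
      simp [hforced] at this
    · simp [hforced] at h
  · rw [expand_iterate_eq hge hle hm.le]
    exact mul_sub_leastPrefix_mem hge hle hm

end FoldPoint

section Homeomorphism

variable {x : ℝ}

theorem exists_continuous_bijOn_of_infinite_compl {X : Type*} [TopologicalSpace X] {S : Set ℕ}
    (hS : Sᶜ.Infinite) (c : ℕ → X) :
    ∃ r : (ℕ → X) → ℕ → X, Continuous r ∧ BijOn r {a | EqOn a c S} univ := by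
  classical
  have := hS.to_subtype
  obtain ⟨e⟩ : Nonempty (ℕ ≃ ↥Sᶜ) := nonempty_equiv_of_countable
  refine ⟨fun a n => a (e n), by fun_prop, mapsTo_univ _ _, fun a ha a' ha' h => ?_, fun d _ => ?_⟩
  · ext i
    by_cases hi : i ∈ S
    · rw [ha hi, ha' hi]
    · simpa using congrFun h (e.symm ⟨i, hi⟩)
  · refine ⟨fun i => if hi : i ∈ S then c i else d (e.symm ⟨i, hi⟩), fun i hi => dif_pos hi, ?_⟩
    ext n
    simp only [dif_neg (e n).2, Subtype.coe_eta, Equiv.symm_apply_apply]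

open Classical in
theorem bijOn_itinerary : BijOn itinerary inseparableCantorSet
    {a | EqOn a (fun i => decide (∃ s, Forced true s i)) {i | ∃ b s, Forced b s i}} := by
  refine ⟨fun x hx i hi => ?_, fun x hx y hy hxy => ?_, fun a ha => ?_⟩
  · obtain ⟨b, s, h⟩ := hi
    simp only [itinerary_eq_of_forced hx h, h.exists_true_iff, Bool.decide_eq_true]
  · rw [mem_inseparableCantorSet_iff] at hx hy
    rw [eq_ofItinerary fun i => (hx i).1, eq_ofItinerary fun i => (hy i).1, hxy]
  · refine ⟨ofItinerary a, mem_inseparableCantorSet_iff.2 fun i => ?_, itinerary_ofItinerary a⟩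
    rw [itinerary_ofItinerary]
    refine ⟨expand_iterate_ofItinerary_mem i a, fun s h => ?_⟩
    have hai : a i = decide (∃ s, Forced true s i) := ha ⟨_, s, h⟩
    simp only [h.exists_true_iff, Bool.decide_eq_true] at hai
    exact Bool.not_ne_self _ hai.symm

theorem infinite_compl_forced : {i | ∃ b s, Forced b s i}ᶜ.Infinite := by
  refine infinite_of_injective_forall_mem (f := fun i => 2 * i + 1)
    (fun i j h => by simpa using h) fun i => ?_
  rintro ⟨b, s, h, -⟩
  exact Nat.not_even_bit1 i h

theorem itinerary_eq_false_iff (hx : x ∈ inseparableCantorSet) (i : ℕ) :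
    itinerary x i = false ↔ expand^[i] x < 5 / 8 := by
  have hmem := (mem_inseparableCantorSet_iff.1 hx i).1
  constructor
  · intro h
    rw [h] at hmem
    norm_num [letterInterval, letterDigit] at hmem
    linarith
  · intro h
    simpa [itinerary] using h.le

theorem continuousOn_itinerary : ContinuousOn itinerary inseparableCantorSet := by
  refine continuousOn_pi.2 fun i x hx => ContinuousAt.continuousWithinAt ?_
  have hcont : ContinuousAt expand^[i] x := (continuous_expand.iterate i).continuousAt
  refine (continuousAt_const (y := itinerary x i)).congr_of_eventuallyEq ?_
  cases hxi : itinerary x i with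
  | true =>
    filter_upwards [hcont.eventually_const_lt (of_decide_eq_true hxi)] with y hy
    exact decide_eq_true hy
  | false =>
    filter_upwards [hcont.eventually_lt_const ((itinerary_eq_false_iff hx i).1 hxi)] with y hy
    exact decide_eq_false hy.le.not_gt

theorem middleThirdsCantorSet_eq_cantorSet : middleThirdsCantorSet = cantorSet := by
  ext x
  trans ∃ a, (cantorSetEquivNatToBool.symm a : ℝ) = x
  · refine exists_congr fun a => ?_
    rw [eq_comm (a := x)]
    suffices (∑' i : ℕ, 2 * (if a i then (1 : ℝ) else 0) * 3 ^ (-((i : ℤ) + 1))) =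
      Real.ofDigits fun i => cond (a i) (2 : Fin 3) 0 from this ▸ Iff.rfl
    refine tsum_congr fun i => ?_
    rw [zpow_neg, ← Nat.cast_succ, zpow_natCast]
    cases h : a i <;> simp [Real.ofDigitsTerm, h]
  · rw [cantorSetEquivNatToBool.symm.exists_congr_left]
    simp

theorem exists_continuousOn_bijOn_middleThirdsCantorSet : ∃ θ : ℝ → ℝ,
    ContinuousOn θ inseparableCantorSet ∧ BijOn θ inseparableCantorSet middleThirdsCantorSet := by
  obtain ⟨r, hr, hbij⟩ := exists_continuous_bijOn_of_infinite_compl infinite_compl_forced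
    fun i => open Classical in decide (∃ s, Forced true s i)
  refine ⟨fun x => cantorSetHomeomorphNatToBool.symm (r (itinerary x)), ?_, ?_⟩
  · exact (continuous_subtype_val.comp (cantorSetHomeomorphNatToBool.symm.continuous.comp
      hr)).comp_continuousOn continuousOn_itinerary
  · rw [middleThirdsCantorSet_eq_cantorSet]
    have hval : BijOn (fun a => (cantorSetHomeomorphNatToBool.symm a : ℝ)) univ cantorSet := by
      refine ⟨fun a _ => (cantorSetHomeomorphNatToBool.symm a).2, ?_, fun c hc => ?_⟩
      · exact (Subtype.val_injective.comp cantorSetHomeomorphNatToBool.symm.injective).injOn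
      · exact ⟨cantorSetHomeomorphNatToBool ⟨c, hc⟩, trivial, by simp⟩
    exact hval.comp (hbij.comp bijOn_itinerary)

theorem inseparableCantorSet_nonempty : inseparableCantorSet.Nonempty := by
  obtain ⟨θ, -, hθ⟩ := exists_continuousOn_bijOn_middleThirdsCantorSet
  obtain ⟨x, hx, -⟩ := hθ.surjOn ⟨fun _ => false, rfl⟩
  exact ⟨x, hx⟩

end Homeomorphism

section LetterDefect

/-- A continuous function of `v` that is nonpositive if and only if `v` lies in an interval that
`cantorStage s` allows for the letter at position `i`. -/
noncomputable def letterDefect (s i : ℕ) (v : ℝ) : ℝ :=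
  if i < s then min (pieceDefect true) (pieceDefect false) else 0
where
  /-- The contribution of the letter `b` to `letterDefect`. -/
  pieceDefect (b : Bool) : ℝ :=
    if Forced (!b) s i then 1
    else max ((letterDigit b : ℕ) / 4 - v) (v - ((letterDigit b : ℕ) + 1) / 4)

variable {s i : ℕ} {v x : ℝ}

theorem letterDefect_nonpos_iff : letterDefect s i v ≤ 0 ↔
    (i < s → ∃ b, ¬ Forced (!b) s i ∧ v ∈ letterInterval b) := by
  have hpiece (b : Bool) : letterDefect.pieceDefect s i v b ≤ 0 ↔
      ¬ Forced (!b) s i ∧ v ∈ letterInterval b := by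
    rw [letterDefect.pieceDefect]
    split_ifs with h
    · simp [h]
    · simp [h, letterInterval]
  rw [letterDefect]
  split_ifs with hi
  · simp [hi, hpiece, or_comm]
  · simp [hi]

theorem mem_cantorStage_iff : x ∈ cantorStage s ↔ ∀ i, letterDefect s i (expand^[i] x) ≤ 0 := by
  simp only [letterDefect_nonpos_iff]
  rfl

theorem computablyLipschitz_expand_iterate :
    ComputablyLipschitz fun i z => expand^[i] z.1 := by
  have hx := ComputablyLipschitz.fst (α := ℕ)
  have hexpand : ComputablyLipschitz fun (_ : ℕ) z => expand z.1 :=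
    ((((hx.ofNat_mul 4).sub .one).min ((ComputablyLipschitz.ofNat 3).sub (hx.ofNat_mul 4))).max
      ((hx.ofNat_mul 4).sub (.ofNat 3)))
  have hmap := ComputablyLipschitzMap.recurrence (G := fun _ z => (expand z.1, z.2))
    (H := fun i z => (expand^[i] z.1, z.2)) ⟨hexpand, .snd⟩ (fun _ => rfl)
    fun i z => by rw [Function.iterate_succ_apply']
  exact hmap.1

theorem computablyLipschitz_letterDefect :
    ComputablyLipschitz fun (a : ℕ × ℕ) z => letterDefect a.1 a.2 (expand^[a.2] z.1) := by
  have hv := computablyLipschitz_expand_iterate.reindex (Computable.snd (α := ℕ))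
  have hpiece (b : Bool) : ComputablyLipschitz fun (a : ℕ × ℕ) z =>
      letterDefect.pieceDefect a.1 a.2 (expand^[a.2] z.1) b := by
    have hdigit := ComputablyLipschitz.natCast (.const (α := ℕ × ℕ) (letterDigit b : ℕ))
    exact .ite (computablePred_forced !b) .one
      (((hdigit.div_ofNat 4).sub hv).max (hv.sub ((hdigit.add .one).div_ofNat 4)))
  exact .ite (computablePred_nat_lt Computable.snd Computable.fst)
    ((hpiece true).min (hpiece false)) .zero

end LetterDefect

/-! ### The fan -/

section Level

open Filter

/-- The number of levels of the comb of stage `s`: stage `s` cuts the comb back below level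
`diagonalEntry s` and then puts one new level on top. -/
noncomputable def level : ℕ → ℕ
  | 0 => 0
  | s + 1 => min (diagonalEntry s) (level s) + 1

/-- The level down to which stage `s` cuts the comb back. -/
noncomputable def foldLevel (s : ℕ) : ℕ :=
  min (diagonalEntry s) (level s)

/-- The height of the comb of stage `s`; each level has height two. -/
noncomputable def blockHeight (s : ℕ) : ℕ :=
  2 * level s

/-- The height below which stage `s` leaves the comb unchanged. -/
noncomputable def foldHeight (s : ℕ) : ℕ :=
  2 * foldLevel s

theorem level_succ (s : ℕ) : level (s + 1) = foldLevel s + 1 :=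
  rfl

theorem blockHeight_succ (s : ℕ) : blockHeight (s + 1) = foldHeight s + 2 := by
  rw [blockHeight, level_succ, mul_add, foldHeight]

theorem foldHeight_le_blockHeight (s : ℕ) : foldHeight s ≤ blockHeight s :=
  Nat.mul_le_mul_left 2 (min_le_right _ _)

theorem level_le_self (s : ℕ) : level s ≤ s := by
  induction s with
  | zero => exact le_rfl
  | succ s ih => exact Nat.succ_le_succ ((min_le_right _ _).trans ih)

theorem computable_level : Computable level :=
  computable_of_recurrence (h := fun s l => min (diagonalEntry s) l + 1)
    (Computable.succ.comp (Primrec.nat_min.to_comp.comp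
      (computable_diagonalEntry.comp Computable.fst) Computable.snd)) fun _ => rfl

theorem computable_blockHeight : Computable blockHeight :=
  Primrec.nat_mul.to_comp.comp (Computable.const 2) computable_level

theorem computable_foldHeight : Computable foldHeight :=
  Primrec.nat_mul.to_comp.comp (Computable.const 2)
    (Primrec.nat_min.to_comp.comp computable_diagonalEntry computable_level)

theorem tendsto_foldLevel : Tendsto foldLevel atTop atTop := by
  refine tendsto_atTop.2 fun j => ?_
  induction j with
  | zero => exact .of_forall fun s => Nat.zero_le _
  | succ j ih =>
    obtain ⟨m, hm⟩ := eventually_atTop.1 ih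
    filter_upwards [tendsto_diagonalEntry.eventually_ge_atTop (j + 1),
      eventually_gt_atTop m] with s hentry hs
    obtain ⟨r, rfl⟩ := Nat.exists_eq_add_one_of_ne_zero (Nat.ne_zero_of_lt hs)
    exact le_min hentry (Nat.succ_le_succ (hm r (Nat.le_of_lt_succ hs)))

theorem tendsto_foldHeight : Tendsto (fun s => (foldHeight s : ℝ)) atTop atTop :=
  tendsto_natCast_atTop_atTop.comp (tendsto_foldLevel.const_mul_atTop' two_pos)

theorem exists_forall_foldLevel_le (m : ℕ) : ∃ s ≥ m, ∀ r ≥ m, foldLevel s ≤ foldLevel r :=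
  ⟨Function.argminOn foldLevel (Ici m) nonempty_Ici,
    Function.argminOn_mem foldLevel _ nonempty_Ici, fun _ hr =>
    Function.argminOn_le foldLevel (Ici m) hr⟩

theorem exists_forall_foldLevel_lt (m : ℕ) : ∃ s ≥ m, ∀ r > s, foldLevel s < foldLevel r := by
  have hfin : {r | m ≤ r ∧ foldLevel r ≤ foldLevel m}.Finite := by
    obtain ⟨N, hN⟩ := eventually_atTop.1 (tendsto_foldLevel.eventually_gt_atTop (foldLevel m))
    exact (finite_Iio N).subset fun r hr => by
      by_contra h
      exact (hN r (not_lt.1 h)).not_ge hr.2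
  obtain ⟨s, hs, hmax⟩ := hfin.exists_maximal ⟨m, le_rfl, le_rfl⟩
  refine ⟨s, hs.1, fun r hr => ?_⟩
  by_contra! hle
  exact hr.not_ge (hmax ⟨hs.1.trans hr.le, hle.trans hs.2⟩ hr.le)

end Level

section Orbit

theorem exists_computable_lipschitzWith_stageInv : ∃ L : ℕ → ℕ → ℕ, Computable₂ L ∧
    ∀ s E, LipschitzWith (L s E) (stageInv (foldPoint s) E (blockHeight s) (foldHeight s)) := by
  have hinv := computablyLipschitzMap_stageInv (α := ℕ × ℕ)
    (computable_foldPoint.comp Computable.fst) Computable.snd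
    (computable_blockHeight.comp Computable.fst) (computable_foldHeight.comp Computable.fst)
    fun a => foldHeight_le_blockHeight a.1
  obtain ⟨-, L, -, hL, -, hLip⟩ := hinv.exists_computable_lipschitzWith
  exact ⟨fun s E => L (s, E), hL, fun s E => hLip (s, E)⟩

/-- A computable Lipschitz constant of the inverse of stage `s` with fold ratio `E`. -/
noncomputable def stageInvLipschitz : ℕ → ℕ → ℕ :=
  exists_computable_lipschitzWith_stageInv.choose

/-- A Lipschitz constant of the inverse of the composition of the first `s` stages. The ratio of
stage `s` exceeds it by the factor `4 ^ (s + 2)`, so that what a stage contracts by its ratio is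
small in the original coordinates as well. -/
noncomputable def lipschitzBound : ℕ → ℕ
  | 0 => 1
  | s + 1 => lipschitzBound s * stageInvLipschitz s (4 ^ (s + 2) * (lipschitzBound s + 1))

/-- The ratio with which stage `s` folds the tube. -/
noncomputable def ratio (s : ℕ) : ℕ :=
  4 ^ (s + 2) * (lipschitzBound s + 1)

/-- The image of a point under the first `s` stages. -/
noncomputable def orbit : ℕ → ℝ × ℝ → ℝ × ℝ
  | 0, z => z
  | s + 1, z => stageMap (foldPoint s) (ratio s) (blockHeight s) (foldHeight s) (orbit s z)

theorem lipschitzWith_stageInv (s : ℕ) : LipschitzWith (stageInvLipschitz s (ratio s))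
    (stageInv (foldPoint s) (ratio s) (blockHeight s) (foldHeight s)) :=
  exists_computable_lipschitzWith_stageInv.choose_spec.2 s (ratio s)

theorem computable_ratio : Computable ratio := by
  have hratio : Computable₂ fun s M : ℕ => 4 ^ (s + 2) * (M + 1) :=
    Primrec.nat_mul.to_comp.comp ((computable_pow 4).comp (Computable.succ.comp
      (Computable.succ.comp Computable.fst))) (Computable.succ.comp Computable.snd)
  have hbound : Computable lipschitzBound :=
    computable_of_recurrence (h := fun s M => M * stageInvLipschitz s (4 ^ (s + 2) * (M + 1)))
      (Primrec.nat_mul.to_comp.comp Computable.snd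
        (exists_computable_lipschitzWith_stageInv.choose_spec.1.comp Computable.fst hratio))
      fun _ => rfl
  exact hratio.comp Computable.id hbound

theorem sixteen_mul_four_pow_le_ratio (s : ℕ) : 16 * 4 ^ s ≤ ratio s :=
  calc 16 * 4 ^ s = 4 ^ (s + 2) * 1 := by ring
    _ ≤ 4 ^ (s + 2) * (lipschitzBound s + 1) := by gcongr; omega

theorem one_div_ratio_le (s : ℕ) : 1 / (ratio s : ℝ) ≤ 1 / (8 * 4 ^ s) := by
  have hratio : 8 * 4 ^ s ≤ ratio s :=
    (Nat.mul_le_mul_right _ (by norm_num)).trans (sixteen_mul_four_pow_le_ratio s)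
  exact one_div_le_one_div_of_le (by positivity) (by exact_mod_cast hratio)

theorem lipschitzBound_div_ratio_le (s : ℕ) :
    (lipschitzBound s : ℝ) / ratio s ≤ (1 / 4) ^ s := by
  have hratio : (ratio s : ℝ) = 4 ^ (s + 2) * (lipschitzBound s + 1) := by simp [ratio]
  rw [hratio, div_le_iff₀ (by positivity), one_div, inv_pow, pow_add]
  have h4 : ((4 : ℝ) ^ s)⁻¹ * (4 ^ s * 4 ^ 2 * (lipschitzBound s + 1)) =
      16 * (lipschitzBound s + 1) := by field_simp; norm_num
  rw [h4]
  linarith [(lipschitzBound s).cast_nonneg (α := ℝ)]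

theorem stageParams (s : ℕ) :
    StageParams (foldPoint s) (ratio s) (blockHeight s) (foldHeight s) where
  le_fold := one_div_eight_le_foldPoint s
  le_ratio := by
    have hpow : 1 ≤ 4 ^ s := Nat.one_le_pow _ _ (by norm_num)
    have hratio := sixteen_mul_four_pow_le_ratio s
    exact_mod_cast (by omega : 16 ≤ ratio s)
  nonneg := Nat.cast_nonneg _
  le := by exact_mod_cast foldHeight_le_blockHeight s

theorem computablyLipschitzMap_orbit : ComputablyLipschitzMap orbit :=
  .recurrence (computablyLipschitzMap_stageMap computable_foldPoint computable_ratio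
    computable_blockHeight computable_foldHeight foldHeight_le_blockHeight)
    (fun _ => rfl) fun _ _ => rfl

end Orbit

section Region

/-- The left end of the tube that enters stage `s`. -/
def leftEnd : ℕ → ℚ
  | 0 => 0
  | s + 1 => foldPoint s

/-- The comb approximating the image of the fan under the first `s` stages: teeth over the points
of `cantorStage s`, joined at the top by a solid block. -/
def stageRegion (s : ℕ) : Set (ℝ × ℝ) :=
  {z | leftEnd s ≤ z.1 ∧ z.1 ≤ 1 ∧ 0 ≤ z.2 ∧ z.2 ≤ blockHeight s + 3 ∧
    (blockHeight s ≤ z.2 ∨ z.1 ∈ cantorStage s)}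

/-- The points whose images under all stages lie in the respective combs: a copy of the Cantor
fan. -/
def fan : Set (ℝ × ℝ) :=
  {z | ∀ s, orbit s z ∈ stageRegion s}

/-- The family of continuous functions whose nonpositivity for all `i` defines `stageRegion s`. -/
noncomputable def regionDefect (s i : ℕ) (z : ℝ × ℝ) : ℝ :=
  max (max (max (leftEnd s - z.1) (z.1 - 1)) (max (-z.2) (z.2 - (blockHeight s + 3))))
    (min (blockHeight s - z.2) (letterDefect s i (expand^[i] z.1)))

variable {s : ℕ} {z z' w : ℝ × ℝ}

theorem mem_stageRegion_iff : z ∈ stageRegion s ↔ ∀ i, regionDefect s i z ≤ 0 := by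
  simp only [stageRegion, regionDefect, mem_ofPred_eq, mem_cantorStage_iff, max_le_iff, min_le_iff,
    sub_nonpos, neg_nonpos, forall_and, forall_const, forall_or_left, and_assoc]

theorem computable_leftEnd : Computable leftEnd :=
  computable_of_recurrence (h := fun s _ => foldPoint s)
    (computable_foldPoint.comp Computable.fst) fun _ => rfl

theorem computablyLipschitz_regionDefect :
    ComputablyLipschitz fun (a : ℕ × ℕ) => regionDefect a.1 a.2 := by
  have hx := ComputablyLipschitz.fst (α := ℕ × ℕ)
  have ht := ComputablyLipschitz.snd (α := ℕ × ℕ)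
  have hleft := ComputablyLipschitz.ratCast (computable_leftEnd.comp (Computable.fst (β := ℕ)))
  have hblock := ComputablyLipschitz.natCast
    (computable_blockHeight.comp (Computable.fst (β := ℕ)))
  exact (((hleft.sub hx).max (hx.sub .one)).max (ht.neg.max (ht.sub (hblock.add (.ofNat 3))))).max
    ((hblock.sub ht).min computablyLipschitz_letterDefect)

theorem computablyLipschitz_regionDefect_orbit :
    ComputablyLipschitz fun (a : ℕ × ℕ) z => regionDefect a.1 a.2 (orbit a.1 z) :=
  computablyLipschitz_regionDefect.comp (computablyLipschitzMap_orbit.reindex Computable.fst)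

theorem fan_eq_setOf_forall_regionDefect_nonpos :
    fan = {z | ∀ a : ℕ × ℕ, regionDefect a.1 a.2 (orbit a.1 z) ≤ 0} := by
  simp only [fan, mem_stageRegion_iff, Prod.forall]

theorem isPi01Closed_fan : IsPi01Closed fan :=
  fan_eq_setOf_forall_regionDefect_nonpos ▸
    computablyLipschitz_regionDefect_orbit.isPi01Closed_setOf_nonpos

theorem isClosed_fan : IsClosed fan := by
  simp only [fan_eq_setOf_forall_regionDefect_nonpos, ofPred_forall]
  exact isClosed_iInter fun a =>
    isClosed_le (computablyLipschitz_regionDefect_orbit.continuous a) continuous_const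

theorem isCompact_fan : IsCompact fan := by
  refine (isCompact_Icc (a := ((0 : ℝ), (0 : ℝ))) (b := (1, 3))).of_isClosed_subset
    isClosed_fan fun z hz => ?_
  obtain ⟨hleft, hright, hbot, htop, -⟩ := hz 0
  simp only [orbit, leftEnd, blockHeight, level, mul_zero, Nat.cast_zero, Rat.cast_zero,
    zero_add] at hleft hright hbot htop
  exact ⟨⟨hleft, hbot⟩, hright, htop⟩

theorem leftEnd_le (s : ℕ) : leftEnd s ≤ foldPoint s - 1 / (8 * 4 ^ s : ℝ) := by
  cases s with
  | zero =>
    have hfold := one_div_eight_le_foldPoint 0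
    norm_num [leftEnd] at hfold ⊢
    linarith
  | succ s =>
    have hpos : (0 : ℝ) < 1 / (8 * 4 ^ (s + 1)) := by positivity
    exact foldPoint_le_of_mem s.lt_succ_self (mem_cantorStage_of_le_foldPoint le_rfl (by linarith))

theorem stageInv_mem_stageRegion (hw : w ∈ stageRegion (s + 1)) :
    stageInv (foldPoint s) (ratio s) (blockHeight s) (foldHeight s) w ∈ stageRegion s := by
  have P := stageParams s
  obtain ⟨hleft, hright, hbot, htop, hcomb⟩ := hw
  simp only [leftEnd, blockHeight_succ, Nat.cast_add, Nat.cast_ofNat] at hleft htop hcomb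
  obtain ⟨hge, hle⟩ := P.stageInv_fst_mem hleft
  have hdiv : w.1 / ratio s ≤ 1 / (8 * 4 ^ s) :=
    (div_le_div_of_nonneg_right hright P.ratio_pos.le).trans (one_div_ratio_le s)
  have hheight := P.stageInv_snd_le hleft
  refine ⟨by linarith [leftEnd_le s], hle.trans hright,
    P.stageInv_snd_nonneg hleft hbot (by linarith), by linarith, ?_⟩
  rcases P.stageInv_cases hleft with ⟨hlt, heq⟩ | hblock | hfold
  · exact .inr (heq ▸ cantorStage_anti s.le_succ (hcomb.resolve_left (by linarith)))
  · exact .inl hblock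
  · exact .inr (mem_cantorStage_of_le_foldPoint (by linarith) hfold)

theorem stageMap_stageInv_of_mem_stageRegion (hw : w ∈ stageRegion (s + 1)) :
    stageMap (foldPoint s) (ratio s) (blockHeight s) (foldHeight s)
      (stageInv (foldPoint s) (ratio s) (blockHeight s) (foldHeight s) w) = w := by
  obtain ⟨hleft, -, hbot, htop, -⟩ := hw
  simp only [blockHeight_succ, Nat.cast_add, Nat.cast_ofNat] at htop
  exact (stageParams s).stageMap_stageInv hleft hbot (by linarith)

theorem exists_orbit_eq (hw : w ∈ stageRegion s) :
    ∃ z, orbit s z = w ∧ ∀ r ≤ s, orbit r z ∈ stageRegion r := by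
  induction s generalizing w with
  | zero => exact ⟨w, rfl, fun r hr => (Nat.le_zero.1 hr) ▸ hw⟩
  | succ s ih =>
    obtain ⟨z, hz, hmem⟩ := ih (stageInv_mem_stageRegion hw)
    have horbit : orbit (s + 1) z = w := by
      rw [orbit, hz, stageMap_stageInv_of_mem_stageRegion hw]
    refine ⟨z, horbit, fun r hr => ?_⟩
    rcases hr.lt_or_eq with hlt | rfl
    · exact hmem r (Nat.le_of_lt_succ hlt)
    · exact horbit ▸ hw

theorem dist_le_lipschitzBound_mul (hz : z ∈ fan) (hz' : z' ∈ fan) (s : ℕ) :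
    dist z z' ≤ lipschitzBound s * dist (orbit s z) (orbit s z') := by
  induction s with
  | zero => simp [lipschitzBound, orbit]
  | succ s ih =>
    have hinv {y : ℝ × ℝ} (hy : y ∈ fan) :
        stageInv (foldPoint s) (ratio s) (blockHeight s) (foldHeight s) (orbit (s + 1) y) =
          orbit s y :=
      (stageParams s).stageInv_stageMap (hy s).2.2.1 (hy (s + 1)).1
    have hdist := (lipschitzWith_stageInv s).dist_le_mul (orbit (s + 1) z) (orbit (s + 1) z')
    rw [hinv hz, hinv hz'] at hdist
    calc dist z z' ≤ lipschitzBound s * dist (orbit s z) (orbit s z') := ih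
      _ ≤ lipschitzBound s * (stageInvLipschitz s (ratio s) *
          dist (orbit (s + 1) z) (orbit (s + 1) z')) := by gcongr; exact_mod_cast hdist
      _ = lipschitzBound (s + 1) * dist (orbit (s + 1) z) (orbit (s + 1) z') := by
        rw [lipschitzBound, ← ratio]
        push_cast
        ring

end Region

section Dynamics

variable {z z' : ℝ × ℝ} {s s' : ℕ} {c : ℝ}

theorem orbit_succ_snd_le (hz : z ∈ fan) (s : ℕ) : (orbit (s + 1) z).2 ≤ foldHeight s + 5 := by
  have htop := (hz (s + 1)).2.2.2.1
  rw [blockHeight_succ] at htop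
  push_cast at htop
  linarith

theorem orbit_succ_eq_or_le (hz : z ∈ fan) (s : ℕ) :
    (orbit s z).2 < foldHeight s ∧ orbit (s + 1) z = orbit s z ∨
      foldHeight s ≤ (orbit s z).2 ∧ foldHeight s ≤ (orbit (s + 1) z).2 :=
  (stageParams s).stageMap_eq_self_or_le (hz s).2.2.1 (hz (s + 1)).1 (orbit_succ_snd_le hz s)

theorem orbit_eq_of_snd_lt (hz : z ∈ fan) (hs : s ≤ s')
    (hc : ∀ r ≥ s, r < s' → c ≤ foldHeight r) (h : (orbit s z).2 < c) :
    orbit s' z = orbit s z := by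
  induction s', hs using Nat.le_induction with
  | base => rfl
  | succ r hr ih =>
    have heq := ih fun q hq hqr => hc q hq (hqr.trans r.lt_succ_self)
    rcases orbit_succ_eq_or_le hz r with ⟨-, hsucc⟩ | ⟨hle, -⟩
    · rw [hsucc, heq]
    · rw [heq] at hle
      linarith [hc r hr r.lt_succ_self]

theorem le_orbit_snd (hz : z ∈ fan) (hs : s ≤ s') (hc : ∀ r ≥ s, r < s' → c ≤ foldHeight r)
    (h : c ≤ (orbit s z).2) : c ≤ (orbit s' z).2 := by
  induction s', hs using Nat.le_induction with
  | base => exact h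
  | succ r hr ih =>
    have hle := ih fun q hq hqr => hc q hq (hqr.trans r.lt_succ_self)
    rcases orbit_succ_eq_or_le hz r with ⟨-, hsucc⟩ | ⟨-, hge⟩
    · rwa [hsucc]
    · exact (hc r hr r.lt_succ_self).trans hge

theorem orbit_mem_box (hz : z ∈ fan) (hs : foldHeight s + 2 ≤ (orbit (s + 1) z).2) :
    foldPoint s - 1 / ratio s ≤ (orbit s z).1 ∧ (orbit s z).1 ≤ foldPoint s ∧
      |(orbit s z).2 - (foldHeight s + 1)| ≤ 3 / ratio s :=
  (stageParams s).mem_box_of_add_two_le (hz s).2.2.1 (hz (s + 1)).1 (hz (s + 1)).2.1 hs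
    (orbit_succ_snd_le hz s)

end Dynamics

/-! ### The homeomorphism with the Cantor fan -/

section FanPoint

open AffineMap

/-- A homeomorphism of `inseparableCantorSet` onto the middle-thirds Cantor set. -/
noncomputable def toMiddleThirds : ℝ → ℝ :=
  exists_continuousOn_bijOn_middleThirdsCantorSet.choose

/-- Collapses the top of the strip over `inseparableCantorSet` to the apex: a point at height `t`
goes to the point at distance ratio `(1 + t)⁻¹` from the apex on the corresponding segment. -/
noncomputable def fanPoint (w : ℝ × ℝ) : ℝ × ℝ :=
  lineMap (1 / 2, 0) (toMiddleThirds w.1, 1) (1 + w.2)⁻¹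

variable {w : ℝ × ℝ}

theorem continuousOn_toMiddleThirds : ContinuousOn toMiddleThirds inseparableCantorSet :=
  exists_continuousOn_bijOn_middleThirdsCantorSet.choose_spec.1

theorem bijOn_toMiddleThirds : BijOn toMiddleThirds inseparableCantorSet middleThirdsCantorSet :=
  exists_continuousOn_bijOn_middleThirdsCantorSet.choose_spec.2

theorem fanPoint_snd (w : ℝ × ℝ) : (fanPoint w).2 = (1 + w.2)⁻¹ := by
  simp [fanPoint, lineMap_apply]

theorem fanPoint_eq (w : ℝ × ℝ) : fanPoint w =
    (1 - (1 - (1 + w.2)⁻¹)) • (toMiddleThirds w.1, 1) + (1 - (1 + w.2)⁻¹) • (1 / 2, 0) := by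
  rw [← lineMap_apply_module, lineMap_apply_one_sub, fanPoint]

theorem continuousOn_fanPoint : ContinuousOn fanPoint (inseparableCantorSet ×ˢ Ici 0) := by
  have hcantor : ContinuousOn (fun w : ℝ × ℝ => toMiddleThirds w.1)
      (inseparableCantorSet ×ˢ Ici 0) :=
    continuousOn_toMiddleThirds.comp continuousOn_fst fun _ hw => hw.1
  have hratio : ContinuousOn (fun w : ℝ × ℝ => (1 + w.2)⁻¹) (inseparableCantorSet ×ˢ Ici 0) :=
    ContinuousOn.inv₀ (by fun_prop) fun w hw => (add_pos_of_pos_of_nonneg one_pos hw.2).ne'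
  exact continuousOn_const.lineMap (hcantor.prodMk continuousOn_const) hratio

theorem dist_fanPoint_le (hw : w ∈ inseparableCantorSet ×ˢ Ici (0 : ℝ)) :
    dist (fanPoint w) (1 / 2, 0) ≤ (1 + w.2)⁻¹ := by
  have hmem : toMiddleThirds w.1 ∈ Icc (0 : ℝ) 1 :=
    cantorSet_subset_unitInterval
      (middleThirdsCantorSet_eq_cantorSet ▸ bijOn_toMiddleThirds.mapsTo hw.1)
  have hdist : dist ((1 / 2, 0) : ℝ × ℝ) (toMiddleThirds w.1, 1) ≤ 1 := by
    rw [Prod.dist_eq, max_le_iff, Real.dist_eq, abs_le]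
    exact ⟨⟨by linarith [hmem.2], by linarith [hmem.1]⟩, by simp⟩
  have hratio : 0 ≤ (1 + w.2)⁻¹ := inv_nonneg.2 (add_nonneg zero_le_one hw.2)
  rw [fanPoint, dist_lineMap_left, Real.norm_of_nonneg hratio]
  exact mul_le_of_le_one_right hratio hdist

theorem mapsTo_fanPoint :
    MapsTo fanPoint (inseparableCantorSet ×ˢ Ici 0) (cantorFanSet \ {(1 / 2, 0)}) := by
  rintro w ⟨hx, ht⟩
  have hpos : 0 < 1 + w.2 := add_pos_of_pos_of_nonneg one_pos ht
  have hratio : (1 + w.2)⁻¹ ≤ 1 := inv_le_one_of_one_le₀ (le_add_of_nonneg_right ht)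
  refine ⟨⟨_, bijOn_toMiddleThirds.mapsTo hx, _, ⟨sub_nonneg.2 hratio, ?_⟩, fanPoint_eq w⟩,
    fun h => ?_⟩
  · linarith [inv_pos.2 hpos]
  · exact (inv_pos.2 hpos).ne' ((fanPoint_snd w).symm.trans (congrArg Prod.snd h))

theorem injOn_fanPoint : InjOn fanPoint (inseparableCantorSet ×ˢ Ici 0) := by
  rintro ⟨x, t⟩ ⟨hx, ht⟩ ⟨x', t'⟩ ⟨hx', -⟩ h
  have hsnd : (1 + t)⁻¹ = (1 + t')⁻¹ := by
    rw [← fanPoint_snd (x, t), ← fanPoint_snd (x', t'), h]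
  obtain rfl : t = t' := add_left_cancel (inv_injective hsnd)
  have hpos : (1 + t)⁻¹ ≠ 0 := inv_ne_zero (add_pos_of_pos_of_nonneg one_pos ht).ne'
  have hfst : toMiddleThirds x = toMiddleThirds x' := by
    simpa [fanPoint, lineMap_apply, hpos] using congrArg Prod.fst h
  exact Prod.ext (bijOn_toMiddleThirds.injOn hx hx' hfst) rfl

theorem surjOn_fanPoint :
    SurjOn fanPoint (inseparableCantorSet ×ˢ Ici 0) (cantorFanSet \ {(1 / 2, 0)}) := by
  rintro _ ⟨⟨c, hc, t, ⟨ht0, ht1⟩, rfl⟩, hne⟩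
  obtain ⟨x, hx, rfl⟩ := bijOn_toMiddleThirds.surjOn hc
  have ht : 0 < 1 - t := sub_pos.2 <| ht1.lt_of_ne fun h => hne (by simp [h])
  refine ⟨(x, (1 - t)⁻¹ - 1), ⟨hx, sub_nonneg.2 ((one_le_inv₀ ht).2 (by linarith))⟩, ?_⟩
  simp [fanPoint_eq]

theorem bijOn_fanPoint :
    BijOn fanPoint (inseparableCantorSet ×ˢ Ici 0) (cantorFanSet \ {(1 / 2, 0)}) :=
  ⟨mapsTo_fanPoint, injOn_fanPoint, surjOn_fanPoint⟩

theorem apex_mem_cantorFanSet : (1 / 2, 0) ∈ cantorFanSet := by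
  obtain ⟨x, hx⟩ := inseparableCantorSet_nonempty
  exact ⟨_, bijOn_toMiddleThirds.mapsTo hx, 1, ⟨zero_le_one, le_rfl⟩, by simp⟩

end FanPoint

section Stable

open Filter Topology

/-- The orbit of `z` is constant from stage `s` on. -/
def StableFrom (z : ℝ × ℝ) (s : ℕ) : Prop :=
  ∀ r ≥ s, orbit r z = orbit s z

variable {z z' : ℝ × ℝ} {s s' : ℕ} {c x t : ℝ}

theorem StableFrom.mono (h : StableFrom z s) (hs : s ≤ s') : StableFrom z s' := fun r hr => by
  rw [h r (hs.trans hr), h s' hs]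

theorem stableFrom_of_snd_lt (hz : z ∈ fan) (hc : ∀ r ≥ s, c ≤ foldHeight r)
    (h : (orbit s z).2 < c) : StableFrom z s :=
  fun _ hr => orbit_eq_of_snd_lt hz hr (fun q hq _ => hc q hq) h

theorem le_orbit_snd_of_not_stable (hz : z ∈ fan) (hstable : ¬ ∃ s, StableFrom z s)
    (hc : ∀ r ≥ s, c ≤ foldHeight r) : c ≤ (orbit s z).2 := by
  by_contra! h
  exact hstable ⟨s, stableFrom_of_snd_lt hz hc h⟩

theorem StableFrom.orbit_fst_mem (h : StableFrom z s) (hz : z ∈ fan) :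
    (orbit s z).1 ∈ inseparableCantorSet := by
  refine mem_iInter.2 fun q => ?_
  obtain ⟨r, hheight, hs, hq⟩ := ((tendsto_foldHeight.eventually_gt_atTop (orbit s z).2).and
    ((eventually_ge_atTop s).and (eventually_ge_atTop q))).exists
  have hcomb := (hz r).2.2.2.2
  rw [h r hs] at hcomb
  exact cantorStage_anti hq (hcomb.resolve_left
    (not_le.2 (hheight.trans_le (stageParams r).le)))

theorem StableFrom.orbit_mem (h : StableFrom z s) (hz : z ∈ fan) :
    orbit s z ∈ inseparableCantorSet ×ˢ Ici (0 : ℝ) :=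
  ⟨h.orbit_fst_mem hz, (hz s).2.2.1⟩

theorem mk_mem_stageRegion (hx : x ∈ inseparableCantorSet) (ht : 0 ≤ t) (hs : t ≤ foldHeight s) :
    (x, t) ∈ stageRegion s := by
  have hIcc : x ∈ Icc (1 / 4 : ℝ) 1 :=
    letterInterval_subset_Icc ((mem_inseparableCantorSet_iff.1 hx 0).1)
  have hleft : leftEnd s ≤ x := by
    cases s with
    | zero => simpa [leftEnd] using (by norm_num : (0 : ℝ) ≤ 1 / 4).trans hIcc.1
    | succ s => exact foldPoint_le_of_mem s.lt_succ_self (mem_iInter.1 hx _)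
  exact ⟨hleft, hIcc.2, ht, by linarith [(stageParams s).le], .inr (mem_iInter.1 hx s)⟩

theorem exists_stableFrom_orbit_eq (hx : x ∈ inseparableCantorSet) (ht : 0 ≤ t) :
    ∃ z ∈ fan, ∃ s, StableFrom z s ∧ orbit s z = (x, t) := by
  obtain ⟨s, hs⟩ := eventually_atTop.1 (tendsto_foldHeight.eventually_ge_atTop t)
  obtain ⟨z, hz, hmem⟩ := exists_orbit_eq (mk_mem_stageRegion hx ht (hs s le_rfl))
  have hfix (r : ℕ) (hr : r ≥ s) : orbit r z = (x, t) := by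
    induction r, hr using Nat.le_induction with
    | base => exact hz
    | succ r hr ih =>
      rw [orbit, ih]
      exact (stageParams r).stageMap_eq_self
        (foldPoint_le_of_mem r.lt_succ_self (mem_iInter.1 hx _)) ht (hs r hr)
  refine ⟨z, fun r => ?_, s, fun r hr => (hfix r hr).trans hz.symm, hz⟩
  rcases le_total r s with hr | hr
  · exact hmem r hr
  · exact hfix r hr ▸ mk_mem_stageRegion hx ht (hs r hr)

theorem orbit_injOn (s : ℕ) : InjOn (orbit s) fan := fun z hz z' hz' h =>
  dist_le_zero.1 ((dist_le_lipschitzBound_mul hz hz' s).trans_eq (by rw [h, dist_self, mul_zero]))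

/-- At a stage after which the comb is never again cut back as far, the images of two unstable
points lie in a common box whose size is of the order of the inverse of the ratio. -/
theorem dist_le_of_not_stable (hz : z ∈ fan) (hz' : z' ∈ fan) (hstable : ¬ ∃ s, StableFrom z s)
    (hstable' : ¬ ∃ s, StableFrom z' s) (hs : ∀ r > s, foldLevel s < foldLevel r) :
    dist z z' ≤ 6 * (1 / 4) ^ s := by
  have hc (r : ℕ) (hr : r ≥ s + 1) : (foldHeight s : ℝ) + 2 ≤ foldHeight r := by
    have := hs r hr
    exact_mod_cast (by unfold foldHeight; omega : foldHeight s + 2 ≤ foldHeight r)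
  obtain ⟨hleft, hright, hheight⟩ := orbit_mem_box hz (le_orbit_snd_of_not_stable hz hstable hc)
  obtain ⟨hleft', hright', hheight'⟩ :=
    orbit_mem_box hz' (le_orbit_snd_of_not_stable hz' hstable' hc)
  rw [abs_le] at hheight hheight'
  have hE : 0 < 1 / (ratio s : ℝ) := one_div_pos.2 (stageParams s).ratio_pos
  have h3 : 3 / (ratio s : ℝ) = 3 * (1 / ratio s) := by ring
  have hdist : dist (orbit s z) (orbit s z') ≤ 6 * (1 / ratio s) := by
    rw [Prod.dist_eq, max_le_iff, Real.dist_eq, Real.dist_eq, abs_le, abs_le]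
    exact ⟨⟨by linarith, by linarith⟩, by linarith, by linarith⟩
  calc dist z z' ≤ lipschitzBound s * dist (orbit s z) (orbit s z') :=
        dist_le_lipschitzBound_mul hz hz' s
    _ ≤ lipschitzBound s * (6 * (1 / ratio s)) := by gcongr
    _ = 6 * (lipschitzBound s / ratio s) := by ring
    _ ≤ 6 * (1 / 4) ^ s := by gcongr; exact lipschitzBound_div_ratio_le s

theorem eq_of_not_stable (hz : z ∈ fan) (hz' : z' ∈ fan) (hstable : ¬ ∃ s, StableFrom z s)
    (hstable' : ¬ ∃ s, StableFrom z' s) : z = z' := by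
  have hlim : Tendsto (fun s : ℕ => 6 * (1 / 4 : ℝ) ^ s) atTop (𝓝 (6 * 0)) :=
    (tendsto_pow_atTop_nhds_zero_of_lt_one (by norm_num) (by norm_num)).const_mul 6
  rw [mul_zero] at hlim
  refine dist_le_zero.1 (ge_of_tendsto_of_frequently hlim (frequently_atTop.2 fun m => ?_))
  obtain ⟨s, hm, hs⟩ := exists_forall_foldLevel_lt m
  exact ⟨s, hm, dist_le_of_not_stable hz hz' hstable hstable' hs⟩

end Stable

section FanMap

open Filter Topology

open Classical in
/-- The homeomorphism of `fan` onto the Cantor fan: it reads off the limit of the orbit, and sends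
the one point whose orbit does not settle to the apex. -/
noncomputable def fanMap (z : ℝ × ℝ) : ℝ × ℝ :=
  if h : ∃ s, StableFrom z s then fanPoint (orbit h.choose z) else (1 / 2, 0)

variable {z : ℝ × ℝ} {s : ℕ}

theorem StableFrom.fanMap_eq (h : StableFrom z s) : fanMap z = fanPoint (orbit s z) := by
  have hex : ∃ s, StableFrom z s := ⟨s, h⟩
  rw [fanMap, dif_pos hex, ← hex.choose_spec _ (le_max_right s _), h _ (le_max_left s _)]

theorem fanMap_eq_apex (h : ¬ ∃ s, StableFrom z s) : fanMap z = (1 / 2, 0) :=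
  dif_neg h

theorem StableFrom.continuousWithinAt_fanMap (h : StableFrom z s) (hz : z ∈ fan) :
    ContinuousWithinAt fanMap fan z := by
  obtain ⟨m, hm⟩ :=
    eventually_atTop.1 (tendsto_foldHeight.eventually_ge_atTop ((orbit s z).2 + 1))
  have hzq : StableFrom z (max s m) := h.mono (le_max_left s m)
  have hcont : Continuous (orbit (max s m)) := computablyLipschitzMap_orbit.continuous _
  have hnear : ∀ᶠ y in 𝓝[fan] z, StableFrom y (max s m) := by
    have hlt : ∀ᶠ y in 𝓝 z, (orbit (max s m) y).2 < (orbit s z).2 + 1 :=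
      hcont.snd.continuousAt.eventually_lt_const (by simp [h _ (le_max_left s m)])
    filter_upwards [mem_nhdsWithin_of_mem_nhds hlt, self_mem_nhdsWithin] with y hy hyfan
    exact stableFrom_of_snd_lt hyfan (fun r hr => hm r ((le_max_right s m).trans hr)) hy
  have hcomp : ContinuousWithinAt (fun y => fanPoint (orbit (max s m) y))
      (fan ∩ {y | StableFrom y (max s m)}) z :=
    (continuousOn_fanPoint _ (hzq.orbit_mem hz)).comp hcont.continuousWithinAt
      fun y hy => StableFrom.orbit_mem hy.2 hy.1
  exact (hcomp.congr (fun y hy => hy.2.fanMap_eq) hzq.fanMap_eq).mono_of_mem_nhdsWithin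
    (inter_mem self_mem_nhdsWithin hnear)

theorem continuousWithinAt_fanMap_of_not_stable (hz : z ∈ fan)
    (hstable : ¬ ∃ s, StableFrom z s) : ContinuousWithinAt fanMap fan z := by
  rw [ContinuousWithinAt, fanMap_eq_apex hstable, Metric.tendsto_nhds]
  intro ε hε
  obtain ⟨j, hj⟩ := exists_nat_one_div_lt hε
  obtain ⟨s, hs⟩ := eventually_atTop.1 (tendsto_foldHeight.eventually_ge_atTop ((j : ℝ) + 1))
  have hzs : (j : ℝ) + 1 ≤ (orbit s z).2 := le_orbit_snd_of_not_stable hz hstable hs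
  have hnear : ∀ᶠ y in 𝓝 z, (j : ℝ) < (orbit s y).2 :=
    (computablyLipschitzMap_orbit.continuous s).snd.continuousAt.eventually_const_lt (by linarith)
  filter_upwards [mem_nhdsWithin_of_mem_nhds hnear, self_mem_nhdsWithin] with y hy hyfan
  by_cases hy_stable : ∃ q, StableFrom y q
  · obtain ⟨q, hq⟩ := hy_stable
    have hq := hq.mono (le_max_right s q)
    have hheight : (j : ℝ) ≤ (orbit (max s q) y).2 :=
      le_orbit_snd hyfan (le_max_left s q) (fun r hr _ => by linarith [hs r hr]) hy.le
    calc dist (fanMap y) (1 / 2, 0) ≤ (1 + (orbit (max s q) y).2)⁻¹ :=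
          hq.fanMap_eq ▸ dist_fanPoint_le (hq.orbit_mem hyfan)
      _ ≤ 1 / (j + 1) := by rw [← one_div, add_comm]; gcongr
      _ < ε := hj
  · rwa [fanMap_eq_apex hy_stable, dist_self]

theorem continuousOn_fanMap : ContinuousOn fanMap fan := fun z hz => by
  by_cases hstable : ∃ s, StableFrom z s
  · obtain ⟨s, hs⟩ := hstable
    exact hs.continuousWithinAt_fanMap hz
  · exact continuousWithinAt_fanMap_of_not_stable hz hstable

theorem fanMap_eq_apex_iff (hz : z ∈ fan) : fanMap z = (1 / 2, 0) ↔ ¬ ∃ s, StableFrom z s := by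
  refine ⟨fun h ⟨s, hs⟩ => ?_, fanMap_eq_apex⟩
  exact (mapsTo_fanPoint (hs.orbit_mem hz)).2 (hs.fanMap_eq.symm.trans h)

theorem mapsTo_fanMap : MapsTo fanMap fan cantorFanSet := fun z hz => by
  by_cases hstable : ∃ s, StableFrom z s
  · obtain ⟨s, hs⟩ := hstable
    exact hs.fanMap_eq ▸ (mapsTo_fanPoint (hs.orbit_mem hz)).1
  · exact fanMap_eq_apex hstable ▸ apex_mem_cantorFanSet

theorem injOn_fanMap : InjOn fanMap fan := fun z hz z' hz' h => by
  by_cases hstable : ∃ s, StableFrom z s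
  · have hstable' : ∃ s, StableFrom z' s := by
      rwa [← not_not (a := ∃ s, StableFrom z' s), ← fanMap_eq_apex_iff hz', ← h,
        fanMap_eq_apex_iff hz, not_not]
    obtain ⟨s, hs⟩ := hstable
    obtain ⟨s', hs'⟩ := hstable'
    have hs := hs.mono (le_max_left s s')
    have hs' := hs'.mono (le_max_right s s')
    rw [hs.fanMap_eq, hs'.fanMap_eq] at h
    exact orbit_injOn _ hz hz' (injOn_fanPoint (hs.orbit_mem hz) (hs'.orbit_mem hz') h)
  · refine eq_of_not_stable hz hz' hstable ?_
    rwa [← fanMap_eq_apex_iff hz', ← h, fanMap_eq_apex_iff hz]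

theorem diff_apex_subset_image_fanMap : cantorFanSet \ {(1 / 2, 0)} ⊆ fanMap '' fan := by
  rw [← bijOn_fanPoint.image_eq]
  rintro _ ⟨⟨x, t⟩, ⟨hx, ht⟩, rfl⟩
  obtain ⟨z, hz, s, hs, horbit⟩ := exists_stableFrom_orbit_eq hx ht
  exact ⟨z, hz, by rw [hs.fanMap_eq, horbit]⟩

theorem apex_mem_closure : (1 / 2, 0) ∈ closure (cantorFanSet \ {((1 / 2, 0) : ℝ × ℝ)}) := by
  obtain ⟨x, hx⟩ := inseparableCantorSet_nonempty
  have hmem (n : ℕ) : (x, (n : ℝ)) ∈ inseparableCantorSet ×ˢ Ici (0 : ℝ) :=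
    ⟨hx, mem_Ici.2 n.cast_nonneg⟩
  have hlim : Tendsto (fun n : ℕ => fanPoint (x, n)) atTop (𝓝 (1 / 2, 0)) := by
    refine tendsto_iff_dist_tendsto_zero.2 (squeeze_zero (fun _ => dist_nonneg)
      (fun n => dist_fanPoint_le (hmem n)) ?_)
    simpa [add_comm] using tendsto_one_div_add_atTop_nhds_zero_nat (𝕜 := ℝ)
  exact mem_closure_of_tendsto hlim (.of_forall fun n => mapsTo_fanPoint (hmem n))

theorem surjOn_fanMap : SurjOn fanMap fan cantorFanSet := by
  have hclosed : IsClosed (fanMap '' fan) :=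
    (isCompact_fan.image_of_continuousOn continuousOn_fanMap).isClosed
  intro p hp
  by_cases hapex : p = (1 / 2, 0)
  · exact hapex ▸ hclosed.closure_subset_iff.2 diff_apex_subset_image_fanMap apex_mem_closure
  · exact diff_apex_subset_image_fanMap ⟨hp, hapex⟩

theorem nonempty_fan_homeomorph_cantorFanSet : Nonempty (↥fan ≃ₜ ↥cantorFanSet) := by
  have hbij : BijOn fanMap fan cantorFanSet := ⟨mapsTo_fanMap, injOn_fanMap, surjOn_fanMap⟩
  have : CompactSpace ↥fan := isCompact_iff_compactSpace.1 isCompact_fan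
  have hcont : Continuous (hbij.equiv fanMap) :=
    (continuousOn_iff_continuous_domRestrict.1 continuousOn_fanMap).subtype_mk _
  exact ⟨hcont.homeoOfEquivCompactToT2⟩

theorem fan_nonempty : fan.Nonempty :=
  let ⟨z, hz, _⟩ := surjOn_fanMap apex_mem_cantorFanSet
  ⟨z, hz⟩

end FanMap

/-! ### Computable points -/

section Computable

variable {z : ℝ × ℝ} {m s r e : ℕ} {x : ℝ}

theorem not_computable_itinerary (hx : x ∈ inseparableCantorSet) :
    ¬ Computable fun e => itinerary x (2 * e) := by
  refine not_computable_of_separates_diagonalEval (fun e s h => ?_) fun e s h => ?_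
  · exact itinerary_eq_of_forced (s := s) hx ⟨even_two_mul e, by simpa using h⟩
  · exact itinerary_eq_of_forced (s := s) hx ⟨even_two_mul e, by simpa using h⟩

theorem computable_itinerary_orbit (hz : IsComputablePoint z)
    (hx : (orbit s z).1 ∈ inseparableCantorSet) : Computable (itinerary (orbit s z).1) := by
  have hexpand : ComputablyLipschitz fun i z => expand^[i] (orbit s z).1 :=
    computablyLipschitz_expand_iterate.comp (computablyLipschitzMap_orbit.reindex (.const s))
  have hmid : ComputablyLipschitz fun (_ : ℕ) _ => (5 / 8 : ℝ) :=
    (ComputablyLipschitz.ofNat 5).div_ofNat 8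
  have htrue : REPred fun i => itinerary (orbit s z).1 i = true :=
    ((hexpand.sub hmid).rePred_pos hz).of_eq fun i => by simp [itinerary]
  have hfalse : REPred fun i => ¬ itinerary (orbit s z).1 i = true :=
    ((hmid.sub hexpand).rePred_pos hz).of_eq fun i => by
      rw [sub_pos, ← itinerary_eq_false_iff hx, Bool.not_eq_true]
  obtain ⟨f, hf, heq⟩ := ComputablePred.computable_iff.1
    (ComputablePred.computable_iff_re_compl_re'.2 ⟨htrue, hfalse⟩)
  exact hf.of_eq fun i => Bool.eq_iff_iff.2 (congrFun heq i).to_iff.symm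

theorem StableFrom.not_isComputablePoint (h : StableFrom z s) (hz : z ∈ fan) :
    ¬ IsComputablePoint z := fun hcomp =>
  not_computable_itinerary (h.orbit_fst_mem hz) <|
    (computable_itinerary_orbit hcomp (h.orbit_fst_mem hz)).comp
      (Primrec.nat_mul.to_comp.comp (.const 2) .id)

theorem foldLevel_lt_of_ne (hs : ∀ q ≥ m, foldLevel s ≤ foldLevel q) (hm : m ≤ s)
    (hlevel : foldLevel s < level m) (hr : m ≤ r) (hne : r ≠ s) : foldLevel s < foldLevel r := by
  have hlevel_of_le {q : ℕ} (hq : m ≤ q) : foldLevel s < level q := by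
    rcases hq.eq_or_lt with rfl | hlt
    · exact hlevel
    · obtain ⟨q, rfl⟩ := Nat.exists_eq_add_one_of_ne_zero (Nat.ne_zero_of_lt hlt)
      exact level_succ q ▸ Nat.lt_succ_of_le (hs q (Nat.le_of_lt_succ hlt))
  have hentry {q : ℕ} (hq : m ≤ q) (h : foldLevel q = foldLevel s) :
      diagonalEntry q = foldLevel s ∧ q ≠ foldLevel s := by
    have hmin : min (diagonalEntry q) (level q) = foldLevel s := h
    have := hlevel_of_le hq
    have := level_le_self m
    omega
  refine (hs r hr).lt_of_ne fun h => hne ?_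
  exact subsingleton_diagonalEntry_eq_of_ne _ (hentry hr h.symm) (hentry hm rfl)

/-- If `diagonalEntry r = e` came after stage `m`, then at the stage after `m` that cuts the comb
back furthest the unstable point would have to lie near the height of the cut, although it was above
level `e` at stage `m` and no stage in between brought it down that far. -/
theorem diagonalEntry_ne_of_lt_orbit_snd (hz : z ∈ fan) (hstable : ¬ ∃ s, StableFrom z s)
    (he : 2 * (e : ℝ) + 3 < (orbit m z).2) (hr : m ≤ r) : diagonalEntry r ≠ e := by
  rintro rfl
  have hlevel : diagonalEntry r < level m := by
    have hheight : (orbit m z).2 ≤ blockHeight m + 3 := (hz m).2.2.2.1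
    rw [blockHeight, Nat.cast_mul, Nat.cast_two] at hheight
    exact_mod_cast (by linarith : (diagonalEntry r : ℝ) < level m)
  obtain ⟨s, hm, hs⟩ := exists_forall_foldLevel_le m
  have hle : foldLevel s ≤ diagonalEntry r := (hs r hr).trans (min_le_left _ _)
  have hfold (q : ℕ) (hq : m ≤ q) (hne : q ≠ s) : (foldHeight s : ℝ) + 2 ≤ foldHeight q := by
    have := foldLevel_lt_of_ne hs hm (hle.trans_lt hlevel) hq hne
    exact_mod_cast (by unfold foldHeight; omega : foldHeight s + 2 ≤ foldHeight q)
  have hlow : (orbit s z).2 ≤ foldHeight s + 1 + 3 / ratio s := by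
    have hbox := (orbit_mem_box hz (le_orbit_snd_of_not_stable hz hstable fun q hq =>
      hfold q (hm.trans (Nat.le_of_succ_le hq)) (Nat.ne_of_gt hq))).2.2
    linarith [(abs_le.1 hbox).2]
  have hhigh : (foldHeight s : ℝ) + 2 ≤ (orbit s z).2 := by
    refine le_orbit_snd hz hm (fun q hq hlt => hfold q hq hlt.ne) ?_
    have hcast : (foldHeight s : ℝ) ≤ 2 * diagonalEntry r :=
      mod_cast (Nat.mul_le_mul_left 2 hle : foldHeight s ≤ 2 * diagonalEntry r)
    linarith
  linarith [(stageParams s).three_div_ratio_le]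

theorem not_isComputablePoint_of_not_stable (hz : z ∈ fan) (hstable : ¬ ∃ s, StableFrom z s) :
    ¬ IsComputablePoint z := fun hcomp => by
  have hheight : ComputablyLipschitz fun (a : ℕ × ℕ) z => (orbit a.2 z).2 - (2 * a.1 + 3) :=
    (computablyLipschitzMap_orbit.reindex Computable.snd).2.sub
      (((ComputablyLipschitz.natCast Computable.fst).ofNat_mul 2).add (.ofNat 3))
  refine not_rePred_of_diagonalEntry_ne (fun e => ?_) (fun e m he r hr => ?_)
    (hheight.rePred_pos hcomp)
  · obtain ⟨s, hs⟩ := Filter.eventually_atTop.1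
      (tendsto_foldHeight.eventually_ge_atTop (2 * (e : ℝ) + 4))
    exact ⟨s, by linarith [le_orbit_snd_of_not_stable hz hstable hs]⟩
  · exact diagonalEntry_ne_of_lt_orbit_snd hz hstable (sub_pos.1 he) hr

theorem not_isComputablePoint_of_mem_fan (hz : z ∈ fan) : ¬ IsComputablePoint z := by
  by_cases hstable : ∃ s, StableFrom z s
  · exact hstable.elim fun s hs => hs.not_isComputablePoint hz
  · exact not_isComputablePoint_of_not_stable hz hstable

end Computable

end CantorFan

theorem exists_pi01_cantor_fan_without_computable_points :
    ∃ Q : Set (ℝ × ℝ), Q.Nonempty ∧ IsPi01Closed Q ∧ Nonempty (↥Q ≃ₜ ↥cantorFanSet) ∧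
      ∀ x ∈ Q, ¬ IsComputablePoint x :=
  ⟨CantorFan.fan, CantorFan.fan_nonempty, CantorFan.isPi01Closed_fan,
    CantorFan.nonempty_fan_homeomorph_cantorFanSet,
    fun _ => CantorFan.not_isComputablePoint_of_mem_fan⟩
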